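/- Suppose the Stochastic Dynamical System generated by μ satisfies conditions (R) and (U). Let ν₁ and ν₂ be two ergodic invariant Radon measures such that supp ν₁ ⊆ supp ν₂ and supp ν₁ is not a discrete subset of ℝ (i.e., supp ν₁ has an accumulation point). Then there exists a constant C > 0 such that ν₁ = C·ν₂. -/

import Mathlib

open MeasureTheory Filter Set Function Topology
open scoped ENNReal NNReal

section SDS

variable {ι : Type*}

/-- An orientation-preserving homeomorphism of `ℝ`, modeled as a strictly increasing
surjection (such a map is automatically a homeomorphism of `ℝ`). -/
def IsOPH (g : ℝ → ℝ) : Prop := StrictMono g ∧ Function.Surjective g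

/-- The Markov chain `X_n^x = g_{ω (n-1)} ∘ ⋯ ∘ g_{ω 0} (x)` driven by the sequence `ω`. -/
def chain (G : ι → ℝ → ℝ) (ω : ℕ → ι) (x : ℝ) : ℕ → ℝ
  | 0 => x
  | n + 1 => G (ω n) (chain G ω x n)

/-- Composition `G l₀ ∘ G l₁ ∘ ⋯` along a list `l`. -/
def comps (G : ι → ℝ → ℝ) (l : List ι) : ℝ → ℝ := l.foldr (fun i f => G i ∘ f) id

/-- The semigroup `Γ*` generated by the maps `G i` under composition. -/
def sgen (G : ι → ℝ → ℝ) : Set (ℝ → ℝ) := {f | ∃ l : List ι, l ≠ [] ∧ f = comps G l}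

variable [MeasurableSpace ι]

/-- `Q` is the product measure `μm^{⊗ℕ}` on `ι^ℕ` (for a discrete base measure `μm`
this property characterizes the product measure). -/
def IsProd (μm : Measure ι) (Q : Measure (ℕ → ι)) : Prop :=
  ∀ (n : ℕ) (c : ℕ → ι),
    Q {ω : ℕ → ι | ∀ k < n, ω k = c k} = ∏ k ∈ Finset.range n, μm {c k}

/-- A Radon measure on `ℝ`: a Borel measure which is finite on compact sets. -/
def IsRadon (ν : Measure ℝ) : Prop := ∀ K : Set ℝ, IsCompact K → ν K < ⊤

/-- Invariance of `ν` for the system generated by the discrete measure `μm` on the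
maps `G i`:  `∫ f dν = Σ_g μ(g) ∫ f(g x) dν(x)` for every continuous compactly
supported `f`. -/
def IsInv (G : ι → ℝ → ℝ) (μm : Measure ι) (ν : Measure ℝ) : Prop :=
  ∀ f : ℝ → ℝ, Continuous f → HasCompactSupport f →
    ∫ x, f x ∂ν = ∑' i : ι, (μm {i}).toReal * ∫ x, f (G i x) ∂ν

/-- Ergodicity: `ν` is invariant and any Borel set whose restriction is again invariant
is either null or conull. -/
def IsErg (G : ι → ℝ → ℝ) (μm : Measure ι) (ν : Measure ℝ) : Prop :=
  IsInv G μm ν ∧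
    ∀ A : Set ℝ, MeasurableSet A → IsInv G μm (ν.restrict A) → ν A = 0 ∨ ν Aᶜ = 0

/-- The support of a measure: points all of whose open neighbourhoods have positive
measure. -/
def msupp (ν : Measure ℝ) : Set ℝ := {x | ∀ U : Set ℝ, IsOpen U → x ∈ U → 0 < ν U}

/-- Condition (R): there is a compact interval visited infinitely often, a.s., from any
starting point. -/
def CondR (G : ι → ℝ → ℝ) (Q : Measure (ℕ → ι)) : Prop :=
  ∃ a b : ℝ, a ≤ b ∧ ∀ x : ℝ, ∀ᵐ ω ∂Q, ∃ᶠ n in atTop, chain G ω x n ∈ Icc a b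

/-- Condition (C): there is an interval `I` such that any compact set can be mapped
into `I` by an element of the semigroup `Γ*`. -/
def CondC (G : ι → ℝ → ℝ) : Prop :=
  ∃ a b : ℝ, ∀ K : Set ℝ, IsCompact K → ∃ g ∈ sgen G, g '' K ⊆ Icc a b

/-- Condition (U): from any point one can move both up and down. -/
def CondU (G : ι → ℝ → ℝ) : Prop :=
  ∀ x : ℝ, ∃ i j : ι, G i x < x ∧ x < G j x

end SDS

/-!
Recurrence forces every excessive measure that is finite on the recurrent interval to be
invariant. Applied to the infimum of two ergodic measures, this shows that they are either
proportional or mutually singular; applied to the counting measure, it shows that an ergodic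
measure whose support accumulates has no atoms.

Suppose that `ν₁` and `ν₂` are mutually singular. The filling scheme, a form of the ratio ergodic
theorem, compares expected numbers of visits along the chain from generic starting points. Up to
small measure, the recurrent interval `[a, b]` splits into compact sets `C₁` and `C₂` at distance
at least `r`, such that orbits of `νᵢ`-generic points spend most of their visits to `[a, b]` in
`Cᵢ`. Since `supp ν₁ ⊆ supp ν₂`, near any point of `supp ν₁` there are arbitrarily long interlaced
sequences `x₀ < y₀ < x₁ < y₁ < ⋯` of `ν₁`-generic points `xⱼ` and `ν₂`-generic points `yⱼ`.
Increasing maps preserve this order. Thus, when a random composition `g` brings a nearby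
`ν₁`-generic point `q` into `[a, b]`, either `g ⁻¹' [a, b]` is small, which is rare because the
preimages of `[a, b]` along a backward path are stopped at their first small term, or `g` squeezes a
whole interlaced sequence into `[a, b]`. In the latter case at most `(b - a) / r` of the pairs
`(g xⱼ, g yⱼ)` can lie in `C₁ × C₂`, so most of them make an atypical visit. Counting such visits
bounds the expected number of visits to `[a, b]`, contrary to recurrence.
-/

/-! ### Random compositions -/

section RandomCompositions

variable {ι α : Type*} {G : ι → α → α} {p : ι → ℝ≥0∞}

/-- The transition operator `P f (x) = ∑ᵢ pᵢ f (Gᵢ x)` of the chain that applies `G i` with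
weight `p i`. -/
noncomputable def transitionOp (G : ι → α → α) (p : ι → ℝ≥0∞) (f : α → ℝ≥0∞) (x : α) : ℝ≥0∞ :=
  ∑' i, p i * f (G i x)

/-- The weighted sum of `Φ` over all compositions of fewer than `n` of the maps `G i`, that is,
the expectation of `∑_{k < n} Φ (g_k ∘ ⋯ ∘ g_1)` for independent `g_j` drawn with weights `p`.
The recursion peels off the map that is applied last. -/
noncomputable def pathSum (G : ι → α → α) (p : ι → ℝ≥0∞) : ℕ → ((α → α) → ℝ≥0∞) → ℝ≥0∞
  | 0, _ => 0
  | n + 1, Φ => Φ id + ∑' i, p i * pathSum G p n fun g => Φ (G i ∘ g)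

/-- The truncated potential `∑_{k < n} Pᵏ f (x)`: the expected sum of `f` along the first `n`
points of the chain started at `x`. -/
noncomputable def potential (G : ι → α → α) (p : ι → ℝ≥0∞) (n : ℕ) (f : α → ℝ≥0∞) (x : α) :
    ℝ≥0∞ :=
  pathSum G p n fun g => f (g x)

/-- The expected number of visits to `A` among the first `n` points of the chain started at `x`. -/
noncomputable abbrev visits (G : ι → α → α) (p : ι → ℝ≥0∞) (A : Set α) (x : α) (n : ℕ) : ℝ≥0∞ :=
  potential G p n (A.indicator 1) x

theorem transitionOp_mono {f g : α → ℝ≥0∞} (h : f ≤ g) :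
    transitionOp G p f ≤ transitionOp G p g := fun x => by
  unfold transitionOp
  gcongr
  exact h _

theorem transitionOp_add (f g : α → ℝ≥0∞) :
    transitionOp G p (f + g) = transitionOp G p f + transitionOp G p g := by
  funext x
  simp only [transitionOp, Pi.add_apply, mul_add, ENNReal.tsum_add]

theorem transitionOp_iSup {f : ℕ → α → ℝ≥0∞} (hf : Monotone f) :
    transitionOp G p (⨆ n, f n) = ⨆ n, transitionOp G p (f n) := by
  funext x
  have monotone_term (i : ι) : Monotone fun n => p i * f n (G i x) := fun m n hmn => by
    dsimp only
    gcongr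
    exact hf hmn _
  simp only [transitionOp, iSup_apply, ENNReal.mul_iSup, ENNReal.tsum_eq_iSup_sum]
  rw [iSup_comm]
  exact iSup_congr fun s => ENNReal.finsetSum_iSup_of_monotone monotone_term

theorem pathSum_mono {C : (α → α) → Prop} (id_mem : C id) (comp_mem : ∀ i g, C g → C (G i ∘ g))
    (n : ℕ) {Φ Ψ : (α → α) → ℝ≥0∞} (h : ∀ g, C g → Φ g ≤ Ψ g) :
    pathSum G p n Φ ≤ pathSum G p n Ψ := by
  induction n generalizing Φ Ψ with
  | zero => exact le_rfl
  | succ n ih =>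
    unfold pathSum
    gcongr
    · exact h _ id_mem
    · exact ih fun g hg => h _ (comp_mem _ g hg)

theorem pathSum_add (n : ℕ) (Φ Ψ : (α → α) → ℝ≥0∞) :
    pathSum G p n (fun g => Φ g + Ψ g) = pathSum G p n Φ + pathSum G p n Ψ := by
  induction n generalizing Φ Ψ with
  | zero => simp [pathSum]
  | succ n ih =>
    simp only [pathSum, ih, mul_add, ENNReal.tsum_add]
    ring

theorem pathSum_tsum {κ : Type*} (n : ℕ) (Φ : κ → (α → α) → ℝ≥0∞) :
    pathSum G p n (fun g => ∑' k, Φ k g) = ∑' k, pathSum G p n (Φ k) := by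
  induction n generalizing Φ with
  | zero => simp [pathSum]
  | succ n ih =>
    simp only [pathSum, ih, ENNReal.tsum_add, ← ENNReal.tsum_mul_left]
    rw [ENNReal.tsum_comm]

theorem pathSum_sum {κ : Type*} (n : ℕ) (s : Finset κ) (Φ : κ → (α → α) → ℝ≥0∞) :
    pathSum G p n (fun g => ∑ k ∈ s, Φ k g) = ∑ k ∈ s, pathSum G p n (Φ k) := by
  simp only [← s.tsum_subtype, pathSum_tsum]

theorem pathSum_const_mul (n : ℕ) (c : ℝ≥0∞) (Φ : (α → α) → ℝ≥0∞) :
    pathSum G p n (fun g => c * Φ g) = c * pathSum G p n Φ := by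
  induction n generalizing Φ with
  | zero => simp [pathSum]
  | succ n ih => simp only [pathSum, ih, mul_add, ← ENNReal.tsum_mul_left, mul_left_comm c]

theorem potential_mono (n : ℕ) {f g : α → ℝ≥0∞} (h : f ≤ g) :
    potential G p n f ≤ potential G p n g := fun _ =>
  pathSum_mono (C := fun _ => True) trivial (fun _ _ _ => trivial) n fun _ _ => h _

theorem potential_const_mul (n : ℕ) (c : ℝ≥0∞) (f : α → ℝ≥0∞) (x : α) :
    potential G p n (fun y => c * f y) x = c * potential G p n f x :=
  pathSum_const_mul n c _

theorem potential_transitionOp (n : ℕ) (f : α → ℝ≥0∞) (x : α) :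
    potential G p n (transitionOp G p f) x = ∑' i, p i * potential G p n (f ∘ G i) x := by
  simp only [potential, transitionOp, pathSum_tsum, pathSum_const_mul, comp_apply]

theorem potential_succ' (n : ℕ) (f : α → ℝ≥0∞) (x : α) :
    potential G p (n + 1) f x = f x + potential G p n (transitionOp G p f) x := by
  rw [potential_transitionOp]
  rfl

theorem potential_succ (n : ℕ) (f : α → ℝ≥0∞) (x : α) :
    potential G p (n + 1) f x = f x + transitionOp G p (potential G p n f) x := by
  induction n generalizing f x with
  | zero => simp [potential, pathSum, transitionOp]
  | succ n ih =>
    have hf : potential G p (n + 1) f = f + potential G p n (transitionOp G p f) :=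
      funext (potential_succ' n f)
    rw [potential_succ', ih, hf, transitionOp_add]
    rfl

theorem potential_monotone (f : α → ℝ≥0∞) : Monotone fun n => potential G p n f := by
  refine monotone_nat_of_le_succ fun n => ?_
  induction n with
  | zero => exact fun _ => zero_le
  | succ n ih =>
    intro x
    rw [potential_succ, potential_succ]
    gcongr
    exact transitionOp_mono ih x

theorem visits_succ_of_notMem {A : Set α} {x : α} (hx : x ∉ A) (n : ℕ) :
    visits G p A x (n + 1) = ∑' i, p i * visits G p A (G i x) n := by
  rw [visits, potential_succ, indicator_of_notMem hx, zero_add, transitionOp]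

theorem visits_mono {A B : Set α} (h : A ⊆ B) (x : α) (n : ℕ) :
    visits G p A x n ≤ visits G p B x n :=
  potential_mono n (indicator_le_indicator_of_subset h fun _ => zero_le) x

theorem visits_le_natCast (hp : ∑' i, p i ≤ 1) (A : Set α) (x : α) (n : ℕ) :
    visits G p A x n ≤ n := by
  induction n generalizing x with
  | zero => exact zero_le
  | succ n ih =>
    calc visits G p A x (n + 1) ≤ 1 + ∑' i, p i * n := by
          rw [visits, potential_succ, transitionOp]
          gcongr
          exacts [indicator_le_self' (fun _ _ => zero_le) x, ih _]
      _ ≤ 1 + 1 * n := by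
          rw [ENNReal.tsum_mul_right]
          gcongr
      _ = (n + 1 : ℕ) := by push_cast; ring

/-- The maximum principle: before its first visit to `A` the chain collects nothing. -/
theorem visits_le_iSup (hp : ∑' i, p i ≤ 1) (A : Set α) (x : α) (n : ℕ) :
    visits G p A x n ≤ ⨆ y ∈ A, visits G p A y n := by
  induction n generalizing x with
  | zero => exact zero_le
  | succ n ih =>
    by_cases hx : x ∈ A
    · exact le_iSup₂ (f := fun y (_ : y ∈ A) => visits G p A y (n + 1)) x hx
    · calc visits G p A x (n + 1) = ∑' i, p i * visits G p A (G i x) n :=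
            visits_succ_of_notMem hx n
        _ ≤ ∑' i, p i * ⨆ y ∈ A, visits G p A y n := by
            gcongr
            exact ih _
        _ ≤ ⨆ y ∈ A, visits G p A y n := by
            rw [ENNReal.tsum_mul_right]
            exact mul_le_of_le_one_left' hp
        _ ≤ _ := iSup₂_mono fun y _ => potential_monotone _ n.le_succ y

variable [Countable ι] [MeasurableSpace α]

theorem measurable_transitionOp (hG : ∀ i, Measurable (G i)) {f : α → ℝ≥0∞} (hf : Measurable f) :
    Measurable (transitionOp G p f) :=
  .tsum fun i => (hf.comp (hG i)).const_mul _

theorem measurable_potential (hG : ∀ i, Measurable (G i)) {f : α → ℝ≥0∞} (hf : Measurable f)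
    (n : ℕ) : Measurable (potential G p n f) := by
  induction n with
  | zero => exact measurable_const
  | succ n ih =>
    rw [funext (potential_succ n f)]
    exact hf.add (measurable_transitionOp hG ih)

end RandomCompositions

/-! ### Excessive and stationary measures -/

section Stationary

variable {ι α : Type*} [MeasurableSpace α] {G : ι → α → α} {p : ι → ℝ≥0∞} {ν ν' : Measure α}

/-- The law `∑ᵢ pᵢ (Gᵢ)_* ν` after one step of the chain. Stationary measures are its fixed
points. -/
noncomputable def pushMeasure (G : ι → α → α) (p : ι → ℝ≥0∞) (ν : Measure α) : Measure α :=
  Measure.sum fun i => p i • ν.map (G i)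

theorem pushMeasure_apply (hG : ∀ i, Measurable (G i)) (ν : Measure α) {s : Set α}
    (hs : MeasurableSet s) : pushMeasure G p ν s = ∑' i, p i * ν (G i ⁻¹' s) := by
  simp only [pushMeasure, Measure.sum_apply _ hs, Measure.smul_apply, smul_eq_mul,
    Measure.map_apply (hG _) hs]

theorem pushMeasure_mono (hG : ∀ i, Measurable (G i)) (h : ν ≤ ν') :
    pushMeasure G p ν ≤ pushMeasure G p ν' :=
  Measure.le_iff.2 fun s hs => by
    rw [pushMeasure_apply hG _ hs, pushMeasure_apply hG _ hs]
    gcongr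

theorem pushMeasure_add (hG : ∀ i, Measurable (G i)) (ν ν' : Measure α) :
    pushMeasure G p (ν + ν') = pushMeasure G p ν + pushMeasure G p ν' :=
  Measure.ext fun s hs => by
    simp only [Measure.add_apply, pushMeasure_apply hG _ hs, mul_add, ENNReal.tsum_add]

theorem pushMeasure_smul (hG : ∀ i, Measurable (G i)) (c : ℝ≥0∞) (ν : Measure α) :
    pushMeasure G p (c • ν) = c • pushMeasure G p ν :=
  Measure.ext fun s hs => by
    simp only [Measure.smul_apply, smul_eq_mul, pushMeasure_apply hG _ hs,
      ← ENNReal.tsum_mul_left, mul_left_comm c]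

theorem lintegral_pushMeasure [Countable ι] (hG : ∀ i, Measurable (G i)) {f : α → ℝ≥0∞}
    (hf : Measurable f) (ν : Measure α) :
    ∫⁻ x, f x ∂(pushMeasure G p ν) = ∫⁻ x, transitionOp G p f x ∂ν := by
  have hfG (i : ι) : Measurable fun x => f (G i x) := hf.comp (hG i)
  simp only [transitionOp, lintegral_tsum fun i => ((hfG i).const_mul _).aemeasurable,
    lintegral_const_mul _ (hfG _), pushMeasure, lintegral_sum_measure, lintegral_smul_measure,
    lintegral_map hf (hG _), smul_eq_mul]

/-- The chain is recurrent with respect to `I`: from every starting point the expected number of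
visits to `I` is infinite. The weights `p` need not sum to one. -/
structure IsRecurrent (G : ι → α → α) (p : ι → ℝ≥0∞) (I : Set α) : Prop where
  measurable : ∀ i, Measurable (G i)
  measurableSet : MeasurableSet I
  iSup_visits : ∀ x, ⨆ n, visits G p I x n = ⊤

theorem IsRecurrent.mono {I J : Set α} (hI : IsRecurrent G p I) (hIJ : I ⊆ J)
    (hJ : MeasurableSet J) : IsRecurrent G p J :=
  ⟨hI.measurable, hJ, fun x => top_le_iff.1 <|
    (hI.iSup_visits x).symm.le.trans (iSup_mono fun n => visits_mono hIJ x n)⟩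

theorem exists_add_eq_of_le [SigmaFinite ν] (h : ν' ≤ ν) : ∃ ρ : Measure α, ν' + ρ = ν := by
  have : SigmaFinite ν' := Measure.sigmaFinite_of_le ν h
  have hrn : ν.withDensity (ν'.rnDeriv ν) = ν' :=
    Measure.withDensity_rnDeriv_eq _ _ h.absolutelyContinuous
  refine ⟨ν.withDensity (1 - ν'.rnDeriv ν), ?_⟩
  nth_rewrite 1 [← hrn]
  rw [← withDensity_add_left (Measure.measurable_rnDeriv _ _)]
  have hone : ν'.rnDeriv ν + (1 - ν'.rnDeriv ν) =ᵐ[ν] 1 := by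
    filter_upwards [Measure.rnDeriv_le_one_of_le h] with x hx
    exact add_tsub_cancel_of_le hx
  rw [withDensity_congr_ae hone, withDensity_one]

/-- The mass `ρ` lost in one step is carried to `I` infinitely often, hence vanishes. -/
theorem IsRecurrent.pushMeasure_eq_of_le [Countable ι] [SigmaFinite ν] {I : Set α}
    (hI : IsRecurrent G p I) (hνI : ν I ≠ ⊤) (hν : pushMeasure G p ν ≤ ν) :
    pushMeasure G p ν = ν := by
  obtain ⟨ρ, hρ⟩ := exists_add_eq_of_le hν
  have lintegral_potential_le (n : ℕ) : ∀ f : α → ℝ≥0∞, Measurable f →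
      ∫⁻ x, potential G p n f x ∂ρ ≤ ∫⁻ x, f x ∂ν := by
    induction n with
    | zero => intro f _; simp [potential, pathSum]
    | succ n ih =>
      intro f hf
      calc ∫⁻ x, potential G p (n + 1) f x ∂ρ
          = ∫⁻ x, f x ∂ρ + ∫⁻ x, potential G p n (transitionOp G p f) x ∂ρ := by
            simp only [potential_succ', lintegral_add_left hf]
        _ ≤ ∫⁻ x, f x ∂ρ + ∫⁻ x, transitionOp G p f x ∂ν :=
            add_le_add le_rfl (ih _ (measurable_transitionOp hI.measurable hf))
        _ = ∫⁻ x, f x ∂ν := by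
            rw [← lintegral_pushMeasure hI.measurable hf, add_comm, ← lintegral_add_measure, hρ]
  have hind : Measurable (I.indicator (1 : α → ℝ≥0∞)) :=
    measurable_one.indicator hI.measurableSet
  have top_mul_le : ⊤ * ρ univ ≤ ν I := by
    rw [← lintegral_const, ← lintegral_indicator_one hI.measurableSet,
      ← lintegral_congr hI.iSup_visits,
      lintegral_iSup (measurable_potential hI.measurable hind) (potential_monotone _)]
    exact iSup_le fun n => lintegral_potential_le n _ hind
  have hρ_zero : ρ = 0 := by
    refine Measure.measure_univ_eq_zero.1 ?_
    by_contra hne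
    exact hνI (top_le_iff.1 (ENNReal.top_mul hne ▸ top_mul_le))
  rwa [hρ_zero, add_zero] at hρ

theorem pushMeasure_indicator_compl_add (hG : ∀ i, Measurable (G i)) (ν : Measure α) (j : ι) :
    pushMeasure G (({j}ᶜ : Set ι).indicator p) ν + p j • ν.map (G j) = pushMeasure G p ν := by
  classical
  refine Measure.ext fun s hs => ?_
  rw [Measure.add_apply, pushMeasure_apply hG ν hs, pushMeasure_apply hG ν hs,
    Measure.smul_apply, Measure.map_apply (hG j) hs, smul_eq_mul,
    ← tsum_ite_eq j fun i => p i * ν (G i ⁻¹' s), ← ENNReal.tsum_add]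
  refine tsum_congr fun i => ?_
  by_cases hi : i = j <;> simp [hi]

theorem IsRecurrent.eq_zero_of_pushMeasure_eq [Countable ι] [SigmaFinite ν] {I : Set α} {j : ι}
    (hI : IsRecurrent G (({j}ᶜ : Set ι).indicator p) I) (hνI : ν I ≠ ⊤)
    (hν : pushMeasure G p ν = ν) (hj : p j ≠ 0) : ν = 0 := by
  have split := (pushMeasure_indicator_compl_add hI.measurable ν j).trans hν
  rw [hI.pushMeasure_eq_of_le hνI (le_of_le_of_eq (Measure.le_add_right le_rfl) split)] at split
  have smul_map_eq_zero : p j • ν.map (G j) = 0 :=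
    (Measure.add_right_inj ν _ _).1 (split.trans (add_zero ν).symm)
  rw [← Measure.measure_univ_eq_zero, Measure.smul_apply, smul_eq_mul, mul_eq_zero,
    Measure.measure_univ_eq_zero, or_iff_right hj] at smul_map_eq_zero
  exact (Measure.map_eq_zero_iff (hI.measurable j).aemeasurable).1 smul_map_eq_zero

end Stationary

section Ergodic

variable {ι α : Type*} [MeasurableSpace α] {G : ι → α → α} {p : ι → ℝ≥0∞} {I : Set α}
  {ν ν₁ ν₂ : Measure α}

theorem pushMeasure_inf_le (hG : ∀ i, Measurable (G i)) (h₁ : pushMeasure G p ν₁ ≤ ν₁)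
    (h₂ : pushMeasure G p ν₂ ≤ ν₂) : pushMeasure G p (ν₁ ⊓ ν₂) ≤ ν₁ ⊓ ν₂ :=
  le_inf ((pushMeasure_mono hG inf_le_left).trans h₁) ((pushMeasure_mono hG inf_le_right).trans h₂)

theorem pushMeasure_eq_of_add (hG : ∀ i, Measurable (G i)) [SigmaFinite ν₁]
    (h₁ : pushMeasure G p ν₁ = ν₁) (h : pushMeasure G p (ν₁ + ν₂) = ν₁ + ν₂) :
    pushMeasure G p ν₂ = ν₂ := by
  rwa [pushMeasure_add hG, h₁, Measure.add_right_inj] at h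

theorem mutuallySingular_of_inf_add_eq [SigmaFinite ν₁] {ρ₁ ρ₂ : Measure α}
    (h₁ : ν₁ ⊓ ν₂ + ρ₁ = ν₁) (h₂ : ν₁ ⊓ ν₂ + ρ₂ = ν₂) : ρ₁ ⟂ₘ ρ₂ := by
  have : SigmaFinite (ν₁ ⊓ ν₂) := Measure.sigmaFinite_of_le ν₁ inf_le_left
  have inf_add_le : ν₁ ⊓ ν₂ + ρ₁ ⊓ ρ₂ ≤ ν₁ ⊓ ν₂ + 0 := by
    rw [add_zero]
    refine le_inf ?_ ?_
    · calc ν₁ ⊓ ν₂ + ρ₁ ⊓ ρ₂ ≤ ν₁ ⊓ ν₂ + ρ₁ := add_le_add le_rfl inf_le_left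
        _ = ν₁ := h₁
    · calc ν₁ ⊓ ν₂ + ρ₁ ⊓ ρ₂ ≤ ν₁ ⊓ ν₂ + ρ₂ := add_le_add le_rfl inf_le_right
        _ = ν₂ := h₂
  rw [Measure.mutuallySingular_iff_disjoint, disjoint_iff]
  exact (Measure.add_right_inj (ν₁ ⊓ ν₂) _ _).1
    (inf_add_le.antisymm (add_le_add le_rfl (Measure.zero_le _)))

theorem pushMeasure_count_le (hG : ∀ i, Measurable (G i)) (hG_inj : ∀ i, Injective (G i))
    (hp : ∑' i, p i ≤ 1) : pushMeasure G p Measure.count ≤ Measure.count := by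
  refine Measure.le_iff.2 fun s hs => ?_
  have count_preimage_le (i : ι) : Measure.count (G i ⁻¹' s) ≤ Measure.count s := by
    rw [Measure.count_apply hs, Measure.count_apply (hG i hs), ← (hG_inj i).encard_image]
    exact_mod_cast encard_le_encard (image_preimage_subset _ _)
  calc pushMeasure G p Measure.count s ≤ ∑' i, p i * Measure.count s := by
        rw [pushMeasure_apply hG _ hs]
        exact ENNReal.tsum_le_tsum fun i => mul_le_mul_right (count_preimage_le i) _
    _ ≤ Measure.count s := by
        rw [ENNReal.tsum_mul_right]
        exact mul_le_of_le_one_left' hp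

theorem dirac_le_count (a : α) : Measure.dirac a ≤ Measure.count :=
  Measure.le_sum Measure.dirac a

/-- An ergodic stationary measure of the chain that applies `G i` with weight `p i`; `ν` may be
infinite. -/
structure IsErgodicStationary (G : ι → α → α) (p : ι → ℝ≥0∞) (ν : Measure α) : Prop where
  stationary : pushMeasure G p ν = ν
  ergodic : ∀ A, MeasurableSet A → pushMeasure G p (ν.restrict A) = ν.restrict A →
    ν A = 0 ∨ ν Aᶜ = 0

namespace IsErgodicStationary

variable [Countable ι] [SigmaFinite ν]

theorem measure_eq_zero_or_compl (hν : IsErgodicStationary G p ν) (hI : IsRecurrent G p I)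
    (hνI : ν I ≠ ⊤) {A : Set α} (hA : MeasurableSet A)
    (hAG : ∀ i, p i ≠ 0 → ν (A ∩ G i ⁻¹' Aᶜ) = 0) : ν A = 0 ∨ ν Aᶜ = 0 := by
  refine hν.ergodic A hA (hI.pushMeasure_eq_of_le ?_ (Measure.le_iff.2 fun B hB => ?_))
  · exact ne_top_of_le_ne_top hνI (Measure.restrict_apply_le A I)
  calc pushMeasure G p (ν.restrict A) B = ∑' i, p i * ν (G i ⁻¹' B ∩ A) := by
        simp only [pushMeasure_apply hI.measurable _ hB,
          Measure.restrict_apply (hI.measurable _ hB)]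
    _ ≤ ∑' i, p i * ν (G i ⁻¹' (B ∩ A)) := by
        refine ENNReal.tsum_le_tsum fun i => ?_
        obtain hpi | hpi := eq_or_ne (p i) 0
        · simp [hpi]
        gcongr 1
        calc ν (G i ⁻¹' B ∩ A) ≤ ν (G i ⁻¹' (B ∩ A) ∪ A ∩ G i ⁻¹' Aᶜ) :=
              measure_mono fun x ⟨hxB, hxA⟩ => by by_cases G i x ∈ A <;> simp_all
          _ ≤ ν (G i ⁻¹' (B ∩ A)) := (measure_union_le _ _).trans (by rw [hAG i hpi, add_zero])
    _ = ν.restrict A B := by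
        rw [← pushMeasure_apply hI.measurable _ (hB.inter hA), hν.stationary,
          Measure.restrict_apply hB]

theorem eq_zero_or_absolutelyContinuous (hν : IsErgodicStationary G p ν) (hI : IsRecurrent G p I)
    (hνI : ν I ≠ ⊤) {ρ : Measure α} [SigmaFinite ρ] (hρ : pushMeasure G p ρ = ρ) (hρν : ρ ≪ ν) :
    ρ = 0 ∨ ν ≪ ρ := by
  have hm : Measurable (ρ.rnDeriv ν) := Measure.measurable_rnDeriv ρ ν
  have measure_eq_zero_iff (s : Set α) : ρ s = 0 ↔ ν ({x | ρ.rnDeriv ν x ≠ 0} ∩ s) = 0 := by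
    nth_rewrite 1 [← Measure.withDensity_rnDeriv_eq ρ ν hρν]
    exact withDensity_apply_eq_zero hm
  set A := {x | ρ.rnDeriv ν x ≠ 0}
  have hA : MeasurableSet A := hm (measurableSet_singleton 0).compl
  have hρA : ∑' i, p i * ρ (G i ⁻¹' Aᶜ) = 0 := by
    rw [← pushMeasure_apply hI.measurable _ hA.compl, hρ, measure_eq_zero_iff]
    simp
  refine (hν.measure_eq_zero_or_compl hI hνI hA fun i hpi => ?_).imp (fun h => ?_) fun h => ?_
  · exact (measure_eq_zero_iff _).1
      ((mul_eq_zero.1 (ENNReal.tsum_eq_zero.1 hρA i)).resolve_left hpi)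
  · rwa [← Measure.measure_univ_eq_zero, measure_eq_zero_iff, inter_univ]
  · refine fun s hs => measure_mono_null (fun x hx => ?_)
      (measure_union_null ((measure_eq_zero_iff s).1 hs) h)
    by_cases x ∈ A <;> simp_all

theorem le_total_of_absolutelyContinuous (hν : IsErgodicStationary G p ν)
    (hI : IsRecurrent G p I) (hνI : ν I ≠ ⊤) [SigmaFinite ν₁] [SigmaFinite ν₂] (h₁I : ν₁ I ≠ ⊤)
    (h₁ : pushMeasure G p ν₁ = ν₁) (h₂ : pushMeasure G p ν₂ = ν₂) (h₁ν : ν₁ ≪ ν) (h₂ν : ν₂ ≪ ν) :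
    ν₁ ≤ ν₂ ∨ ν₂ ≤ ν₁ := by
  have : SigmaFinite (ν₁ ⊓ ν₂) := Measure.sigmaFinite_of_le ν₁ inf_le_left
  have hinf : pushMeasure G p (ν₁ ⊓ ν₂) = ν₁ ⊓ ν₂ :=
    hI.pushMeasure_eq_of_le (ne_top_of_le_ne_top h₁I (inf_le_left (a := ν₁) I))
      (pushMeasure_inf_le hI.measurable h₁.le h₂.le)
  obtain ⟨ρ₁, hρ₁⟩ := exists_add_eq_of_le (inf_le_left : ν₁ ⊓ ν₂ ≤ ν₁)
  obtain ⟨ρ₂, hρ₂⟩ := exists_add_eq_of_le (inf_le_right : ν₁ ⊓ ν₂ ≤ ν₂)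
  have hle₁ : ρ₁ ≤ ν₁ := hρ₁ ▸ Measure.le_add_left le_rfl
  have hle₂ : ρ₂ ≤ ν₂ := hρ₂ ▸ Measure.le_add_left le_rfl
  have : SigmaFinite ρ₂ := Measure.sigmaFinite_of_le ν₂ hle₂
  have hρ₂_stationary : pushMeasure G p ρ₂ = ρ₂ :=
    pushMeasure_eq_of_add hI.measurable hinf (by rw [hρ₂, h₂])
  obtain hzero₂ | hac₂ := hν.eq_zero_or_absolutelyContinuous hI hνI hρ₂_stationary
    (hle₂.absolutelyContinuous.trans h₂ν)
  · right
    rw [← hρ₂, hzero₂, add_zero]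
    exact inf_le_left
  · left
    have hzero₁ : ρ₁ = 0 := Measure.eq_zero_of_absolutelyContinuous_of_mutuallySingular
      ((hle₁.absolutelyContinuous.trans h₁ν).trans hac₂) (mutuallySingular_of_inf_add_eq hρ₁ hρ₂)
    rw [← hρ₁, hzero₁, add_zero]
    exact inf_le_right

/-- The difference `ν₂ - ν₁` is stationary and does not charge `s`, so `ν` cannot be absolutely
continuous with respect to it. -/
theorem eq_of_le_of_measure_eq (hν : IsErgodicStationary G p ν) (hI : IsRecurrent G p I)
    (hνI : ν I ≠ ⊤) [SigmaFinite ν₂] (h₁ : pushMeasure G p ν₁ = ν₁) (h₂ : pushMeasure G p ν₂ = ν₂)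
    (h₂ν : ν₂ ≪ ν) (hle : ν₁ ≤ ν₂) {s : Set α} (hνs : ν s ≠ 0) (hs : ν₁ s = ν₂ s)
    (hs_top : ν₂ s ≠ ⊤) : ν₁ = ν₂ := by
  have : SigmaFinite ν₁ := Measure.sigmaFinite_of_le ν₂ hle
  obtain ⟨ρ, hρ⟩ := exists_add_eq_of_le hle
  have hρle : ρ ≤ ν₂ := hρ ▸ Measure.le_add_left le_rfl
  have : SigmaFinite ρ := Measure.sigmaFinite_of_le ν₂ hρle
  have hρs : ρ s = 0 := by
    rw [← hρ, Measure.add_apply] at hs hs_top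
    exact (ENNReal.add_right_inj (ENNReal.add_ne_top.1 hs_top).1).1 (by rw [← hs, add_zero])
  obtain hzero | hac := hν.eq_zero_or_absolutelyContinuous hI hνI
    (pushMeasure_eq_of_add hI.measurable h₁ (by rw [hρ, h₂])) (hρle.absolutelyContinuous.trans h₂ν)
  · rw [← hρ, hzero, add_zero]
  · exact absurd (hac hρs) hνs

theorem eq_smul_of_absolutelyContinuous (hν : IsErgodicStationary G p ν) (hI : IsRecurrent G p I)
    (hνI : ν I ≠ ⊤) {ν' : Measure α} [SigmaFinite ν'] (hν'I : ν' I ≠ ⊤)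
    (hν' : pushMeasure G p ν' = ν') (hν'ν : ν' ≪ ν) : ∃ c : ℝ≥0, ν' = c • ν := by
  obtain rfl | hν_ne := eq_or_ne ν 0
  · exact ⟨0, by simpa using Measure.absolutelyContinuous_zero_iff.1 hν'ν⟩
  obtain ⟨s, -, -, hs_pos, hs_top⟩ := Measure.exists_subset_measure_lt_top (μ := ν + ν') (r := 0)
    MeasurableSet.univ (by simpa [pos_iff_ne_zero] using fun h => absurd h hν_ne)
  rw [Measure.add_apply] at hs_pos hs_top
  obtain ⟨hνs_top, hν's_top⟩ := ENNReal.add_lt_top.1 hs_top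
  have hνs : ν s ≠ 0 := fun h => hs_pos.ne' (by rw [h, hν'ν h, add_zero])
  obtain ⟨c, hc⟩ : ∃ c : ℝ≥0, (c : ℝ≥0∞) = ν' s / ν s :=
    ENNReal.canLift.prf _ (ENNReal.div_ne_top hν's_top.ne hνs)
  have hcs : (c • ν) s = ν' s := by
    rw [Measure.smul_apply, ENNReal.smul_def, smul_eq_mul, hc,
      ENNReal.div_mul_cancel hνs hνs_top.ne]
  have hcν : pushMeasure G p (c • ν) = c • ν := by
    simpa [hν.stationary] using pushMeasure_smul (p := p) hI.measurable (c : ℝ≥0∞) ν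
  have hcac : c • ν ≪ ν := Measure.smul_absolutelyContinuous
  refine ⟨c, ?_⟩
  obtain hle | hle := hν.le_total_of_absolutelyContinuous hI hνI hν'I hν' hcν hν'ν hcac
  · exact hν.eq_of_le_of_measure_eq hI hνI hν' hcν hcac hle hνs hcs.symm (hcs ▸ hν's_top.ne)
  · exact (hν.eq_of_le_of_measure_eq hI hνI hcν hν' hν'ν hle hνs hcs hν's_top.ne).symm

theorem eq_smul_or_mutuallySingular [SigmaFinite ν₁] [SigmaFinite ν₂]
    (h₁ : IsErgodicStationary G p ν₁) (h₂ : IsErgodicStationary G p ν₂) (hI : IsRecurrent G p I)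
    (h₁I : ν₁ I ≠ ⊤) (h₂I : ν₂ I ≠ ⊤) : (∃ C : ℝ≥0, 0 < C ∧ ν₁ = C • ν₂) ∨ ν₁ ⟂ₘ ν₂ := by
  have : SigmaFinite (ν₁ ⊓ ν₂) := Measure.sigmaFinite_of_le ν₁ inf_le_left
  have hinfI : (ν₁ ⊓ ν₂) I ≠ ⊤ := ne_top_of_le_ne_top h₁I (inf_le_left (a := ν₁) I)
  have hinf : pushMeasure G p (ν₁ ⊓ ν₂) = ν₁ ⊓ ν₂ := hI.pushMeasure_eq_of_le hinfI
    (pushMeasure_inf_le hI.measurable h₁.stationary.le h₂.stationary.le)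
  obtain ⟨a, ha⟩ := h₁.eq_smul_of_absolutelyContinuous hI h₁I hinfI hinf
    (Measure.absolutelyContinuous_of_le inf_le_left)
  obtain ⟨b, hb⟩ := h₂.eq_smul_of_absolutelyContinuous hI h₂I hinfI hinf
    (Measure.absolutelyContinuous_of_le inf_le_right)
  rw [Measure.mutuallySingular_iff_disjoint, disjoint_iff]
  obtain rfl | ha₀ := eq_zero_or_pos a
  · exact .inr (ha.trans (zero_smul _ _))
  obtain rfl | hb₀ := eq_zero_or_pos b
  · exact .inr (hb.trans (zero_smul _ _))
  refine .inl ⟨a⁻¹ * b, by positivity, ?_⟩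
  rw [mul_smul, ← hb, ha, smul_smul, inv_mul_cancel₀ ha₀.ne', one_smul]

theorem measure_singleton_le [MeasurableSingletonClass α] (hν : IsErgodicStationary G p ν)
    (hI : IsRecurrent G p I) (hνI : ν I ≠ ⊤) (hG : ∀ i, Injective (G i)) (hp : ∑' i, p i ≤ 1)
    {a : α} (ha : ν {a} ≠ 0) (x : α) : ν {x} ≤ ν {a} := by
  have ha_top : ν {a} ≠ ⊤ := measure_singleton_lt_top.ne
  set κ := ν {a} • Measure.count ⊓ ν
  have : SigmaFinite κ := Measure.sigmaFinite_of_le ν inf_le_right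
  have hκI : κ I ≠ ⊤ := ne_top_of_le_ne_top hνI (inf_le_right (a := ν {a} • Measure.count) I)
  have hκ : pushMeasure G p κ = κ := hI.pushMeasure_eq_of_le hκI <|
    pushMeasure_inf_le hI.measurable
      ((pushMeasure_smul hI.measurable _ _).trans_le
        (by gcongr; exact pushMeasure_count_le hI.measurable hG hp)) hν.stationary.le
  obtain ⟨c, hc⟩ := hν.eq_smul_of_absolutelyContinuous hI hνI hκI hκ
    (Measure.absolutelyContinuous_of_le inf_le_right)
  have le_κ : ν.restrict {a} ≤ κ := by
    refine le_inf ?_ Measure.restrict_le_self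
    rw [Measure.restrict_singleton]
    gcongr
    exact dirac_le_count a
  have one_le : 1 ≤ (c : ℝ≥0∞) := by
    refine (ENNReal.mul_le_mul_iff_left ha ha_top).1 ?_
    calc 1 * ν {a} = ν.restrict {a} {a} := by rw [one_mul, Measure.restrict_apply_self]
      _ ≤ κ {a} := le_κ _
      _ = c * ν {a} := by rw [hc]; rfl
  calc ν {x} ≤ c * ν {x} := le_mul_of_one_le_left' one_le
    _ = κ {x} := by rw [hc]; rfl
    _ ≤ (ν {a} • Measure.count) {x} := (inf_le_left : κ ≤ _) _
    _ = ν {a} := by simp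

theorem measure_compl_setOf_atom_eq_zero [MeasurableSingletonClass α]
    (hν : IsErgodicStationary G p ν) (hI : IsRecurrent G p I) (hνI : ν I ≠ ⊤) {a : α}
    (ha : ν {a} ≠ 0) : ν {x | ν {x} ≠ 0}ᶜ = 0 := by
  have hcount : {x | 0 < ν {x}}.Countable := Measure.countable_meas_pos_of_disjoint_iUnion
    (fun x => measurableSet_singleton x) fun x y hxy => disjoint_singleton.2 hxy
  simp only [pos_iff_ne_zero] at hcount
  refine (hν.measure_eq_zero_or_compl hI hνI hcount.measurableSet fun i hpi => ?_).resolve_left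
    fun h => ha (measure_mono_null (singleton_subset_iff.2 ha) h)
  have atom_image {x : α} (hx : ν {x} ≠ 0) : ν {G i x} ≠ 0 := by
    rw [← hν.stationary, pushMeasure_apply hI.measurable _ (measurableSet_singleton _)]
    refine fun h => hx (measure_mono_null (t := G i ⁻¹' {G i x}) (by simp) ?_)
    exact (mul_eq_zero.1 (ENNReal.tsum_eq_zero.1 h i)).resolve_left hpi
  convert measure_empty (μ := ν)
  exact disjoint_iff_inter_eq_empty.1 (disjoint_left.2 fun x hx hGx => hGx (atom_image hx))

/-- All atoms have the same mass, so they are locally finite and carry a discrete measure. -/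
theorem nullSingletonClass_of_accPt_support [TopologicalSpace α] [T1Space α] [BorelSpace α]
    [IsLocallyFiniteMeasure ν] (hν : IsErgodicStationary G p ν) (hI : IsRecurrent G p I)
    (hνI : ν I ≠ ⊤) (hG : ∀ i, Injective (G i)) (hp : ∑' i, p i ≤ 1) {z : α}
    (hz : AccPt z (𝓟 ν.support)) : NullSingletonClass ν := by
  refine ⟨fun a => by_contra fun ha => ?_⟩
  set D := {x | ν {x} ≠ 0}
  have hDc : ν Dᶜ = 0 := hν.measure_compl_setOf_atom_eq_zero hI hνI ha
  obtain ⟨U, hzU, hU, hU_top⟩ := ν.exists_isOpen_measure_lt_top z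
  have finite_inter : (D ∩ U).Finite := by
    by_contra hinf
    have htop : ν (D ∩ U) = ⊤ := Set.Infinite.meas_eq_top hinf
      ⟨ν {a}, ha, fun x hx => hν.measure_singleton_le hI hνI hG hp hx.1 a⟩
    exact hU_top.ne (measure_mono_top inter_subset_right htop)
  have hV : IsOpen (U \ ((D ∩ U) \ {z})) := hU.sdiff finite_inter.sdiff.isClosed
  obtain ⟨y, ⟨hyV, hy⟩, hyz⟩ := accPt_iff_nhds.1 hz _ (hV.mem_nhds ⟨hzU, fun h => h.2 rfl⟩)
  have hpos : 0 < ν ((U \ ((D ∩ U) \ {z})) \ {z}) :=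
    (Measure.mem_support_iff_forall y).1 hy _ ((hV.sdiff isClosed_singleton).mem_nhds ⟨hyV, hyz⟩)
  have hsub : (U \ ((D ∩ U) \ {z})) \ {z} ⊆ Dᶜ := fun x hx hxD => hx.1.2 ⟨⟨hxD, hx.1.1⟩, hx.2⟩
  exact hpos.ne' (measure_mono_null hsub hDc)

end IsErgodicStationary

end Ergodic

/-! ### Comparison of potentials -/

section Comparison

variable {ι α : Type*} {G : ι → α → α} {p : ι → ℝ≥0∞}

/-- The filling scheme of `f` and `g`: at every step the mass collected from `f` is used to fill
the holes `g`, and the excess is passed on. It measures by how much the potential of `f` exceeds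
that of `g`. -/
noncomputable def fillingScheme (G : ι → α → α) (p : ι → ℝ≥0∞) (f g : α → ℝ≥0∞) :
    ℕ → α → ℝ≥0∞
  | 0 => 0
  | n + 1 => f + transitionOp G p (fillingScheme G p f g n) - g

theorem fillingScheme_monotone (f g : α → ℝ≥0∞) : Monotone (fillingScheme G p f g) := by
  refine monotone_nat_of_le_succ fun n => ?_
  induction n with
  | zero => exact fun _ => zero_le
  | succ n ih =>
    exact tsub_le_tsub_right (add_le_add le_rfl (transitionOp_mono ih)) g

theorem potential_le_add_fillingScheme (f g : α → ℝ≥0∞) (n : ℕ) :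
    potential G p n f ≤ potential G p n g + fillingScheme G p f g n := by
  induction n with
  | zero => exact fun _ => zero_le
  | succ n ih =>
    have succ_eq (h : α → ℝ≥0∞) :
        potential G p (n + 1) h = h + transitionOp G p (potential G p n h) :=
      funext (potential_succ n h)
    calc potential G p (n + 1) f
        ≤ f + (transitionOp G p (potential G p n g) +
            transitionOp G p (fillingScheme G p f g n)) := by
          rw [succ_eq, ← transitionOp_add]
          exact add_le_add le_rfl (transitionOp_mono ih)
      _ = f + transitionOp G p (fillingScheme G p f g n) +
            transitionOp G p (potential G p n g) := by ring
      _ ≤ fillingScheme G p f g (n + 1) + g + transitionOp G p (potential G p n g) :=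
          add_le_add le_tsub_add le_rfl
      _ = potential G p (n + 1) g + fillingScheme G p f g (n + 1) := by
          rw [succ_eq]
          ring

theorem add_transitionOp_iSup_fillingScheme_le (f g : α → ℝ≥0∞) :
    f + transitionOp G p (⨆ n, fillingScheme G p f g n) ≤ (⨆ n, fillingScheme G p f g n) + g := by
  rw [transitionOp_iSup (fillingScheme_monotone f g)]
  intro x
  simp only [Pi.add_apply, iSup_apply]
  rw [ENNReal.add_iSup]
  refine iSup_le fun n => ?_
  calc f x + transitionOp G p (fillingScheme G p f g n) x
      ≤ fillingScheme G p f g (n + 1) x + g x := le_tsub_add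
    _ ≤ _ := by
      gcongr
      exact le_iSup (fun n => fillingScheme G p f g n x) (n + 1)

variable [Countable ι] [MeasurableSpace α] {ν : Measure α} {f g : α → ℝ≥0∞}

theorem measurable_fillingScheme (hG : ∀ i, Measurable (G i)) (hf : Measurable f)
    (hg : Measurable g) (n : ℕ) : Measurable (fillingScheme G p f g n) := by
  induction n with
  | zero => exact measurable_const
  | succ n ih => exact (hf.add (measurable_transitionOp hG ih)).sub hg

theorem lintegral_add_transitionOp (hG : ∀ i, Measurable (G i)) (hν : pushMeasure G p ν = ν)
    (hf : Measurable f) (hg : Measurable g) :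
    ∫⁻ x, f x + transitionOp G p g x ∂ν = ∫⁻ x, f x ∂ν + ∫⁻ x, g x ∂ν := by
  rw [lintegral_add_left hf, ← lintegral_pushMeasure hG hg, hν]

theorem lintegral_fillingScheme_lt_top (hG : ∀ i, Measurable (G i)) (hν : pushMeasure G p ν = ν)
    (hf : Measurable f) (hg : Measurable g) (hf_top : ∫⁻ x, f x ∂ν ≠ ⊤) (n : ℕ) :
    ∫⁻ x, fillingScheme G p f g n x ∂ν < ⊤ := by
  induction n with
  | zero => simp [fillingScheme]
  | succ n ih =>
    calc ∫⁻ x, fillingScheme G p f g (n + 1) x ∂ν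
        ≤ ∫⁻ x, f x + transitionOp G p (fillingScheme G p f g n) x ∂ν :=
          lintegral_mono fun x => tsub_le_self
      _ = ∫⁻ x, f x ∂ν + ∫⁻ x, fillingScheme G p f g n x ∂ν :=
          lintegral_add_transitionOp hG hν hf (measurable_fillingScheme hG hf hg n)
      _ < ⊤ := ENNReal.add_lt_top.2 ⟨hf_top.lt_top, ih⟩

theorem setLIntegral_fillingScheme_pos_le (hG : ∀ i, Measurable (G i))
    (hν : pushMeasure G p ν = ν) (hf : Measurable f) (hg : Measurable g)
    (hf_top : ∫⁻ x, f x ∂ν ≠ ⊤) (n : ℕ) :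
    ∫⁻ x in {x | 0 < fillingScheme G p f g (n + 1) x}, g x ∂ν ≤ ∫⁻ x, f x ∂ν := by
  set h := fillingScheme G p f g
  have hm : ∀ n, Measurable (h n) := measurable_fillingScheme hG hf hg
  set E := {x | 0 < h (n + 1) x}
  have hE : MeasurableSet E := measurableSet_lt measurable_const (hm _)
  have setLIntegral_eq : ∫⁻ x in E, h (n + 1) x ∂ν = ∫⁻ x, h (n + 1) x ∂ν :=
    setLIntegral_eq_of_support_subset fun x hx => pos_iff_ne_zero.2 hx
  have add_eq (x : α) (hx : x ∈ E) : h (n + 1) x + g x = f x + transitionOp G p (h n) x :=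
    tsub_add_cancel_of_le (tsub_pos_iff_lt.1 hx).le
  refine (ENNReal.add_le_add_iff_left
    (lintegral_fillingScheme_lt_top hG hν hf hg hf_top (n + 1)).ne).1 ?_
  calc ∫⁻ x, h (n + 1) x ∂ν + ∫⁻ x in E, g x ∂ν
      = ∫⁻ x in E, f x + transitionOp G p (h n) x ∂ν := by
        rw [← setLIntegral_eq, ← lintegral_add_left (hm _), setLIntegral_congr_fun hE add_eq]
    _ ≤ ∫⁻ x, f x ∂ν + ∫⁻ x, h n x ∂ν :=
        (setLIntegral_le_lintegral _ _).trans_eq (lintegral_add_transitionOp hG hν hf (hm n))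
    _ ≤ ∫⁻ x, h (n + 1) x ∂ν + ∫⁻ x, f x ∂ν := by
        rw [add_comm]
        gcongr
        exact fillingScheme_monotone f g n.le_succ _

theorem lintegral_le_of_ae_iSup_fillingScheme_ne_zero (hG : ∀ i, Measurable (G i))
    (hν : pushMeasure G p ν = ν) (hf : Measurable f) (hg : Measurable g)
    (hf_top : ∫⁻ x, f x ∂ν ≠ ⊤) (h : ∀ᵐ x ∂ν, (⨆ n, fillingScheme G p f g n) x ≠ 0) :
    ∫⁻ x, g x ∂ν ≤ ∫⁻ x, f x ∂ν := by
  set E := fun n => {x | 0 < fillingScheme G p f g n x}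
  have hE_mono : Monotone E := fun m n hmn x hx => hx.trans_le (fillingScheme_monotone f g hmn x)
  have hE_ae : ∀ᵐ x ∂ν, x ∈ ⋃ n, E n := by
    filter_upwards [h] with x hx
    rw [iSup_apply] at hx
    exact mem_iUnion.2 (lt_iSup_iff.1 (pos_iff_ne_zero.2 hx))
  calc ∫⁻ x, g x ∂ν = ∫⁻ x in ⋃ n, E n, g x ∂ν := by
        rw [Measure.restrict_eq_self_of_ae_mem hE_ae]
    _ = ⨆ n, ∫⁻ x in E n, g x ∂ν := setLIntegral_iUnion_of_directed g hE_mono.directed_le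
    _ ≤ ∫⁻ x, f x ∂ν := iSup_le fun n =>
        (lintegral_mono_set (hE_mono n.le_succ)).trans
          (setLIntegral_fillingScheme_pos_le hG hν hf hg hf_top n)

variable {I : Set α} [SigmaFinite ν]

/-- The points where the filling scheme stays bounded form a forward-invariant set; if it were
null, all holes would eventually be filled. -/
theorem IsErgodicStationary.exists_potential_le_add (hν : IsErgodicStationary G p ν)
    (hI : IsRecurrent G p I) (hνI : ν I ≠ ⊤) (hf : Measurable f) (hg : Measurable g)
    (hg_top : ∀ x, g x ≠ ⊤) (hlt : ∫⁻ x, f x ∂ν < ∫⁻ x, g x ∂ν) :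
    ∃ H : α → ℝ≥0∞, Measurable H ∧ (∀ᵐ x ∂ν, H x ≠ ⊤) ∧
      ∀ n x, potential G p n f x ≤ potential G p n g x + H x := by
  set H := ⨆ n, fillingScheme G p f g n
  have hH : Measurable H := by
    convert Measurable.iSup (measurable_fillingScheme hI.measurable hf hg) using 1
    exact funext fun x => iSup_apply
  refine ⟨H, hH, ?_, fun n x => (potential_le_add_fillingScheme f g n x).trans ?_⟩
  swap
  · exact add_le_add le_rfl (le_iSup (fillingScheme G p f g) n x)
  have ne_top_image {i : ι} (hpi : p i ≠ 0) {x : α} (hx : H x ≠ ⊤) : H (G i x) ≠ ⊤ := by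
    have transitionOp_ne_top : transitionOp G p H x ≠ ⊤ :=
      ne_top_of_le_ne_top (ENNReal.add_ne_top.2 ⟨hx, hg_top x⟩)
        (le_add_self.trans (add_transitionOp_iSup_fillingScheme_le f g x))
    exact fun h =>
      ENNReal.ne_top_of_tsum_ne_top transitionOp_ne_top i (by rw [h, ENNReal.mul_top hpi])
  refine (hν.measure_eq_zero_or_compl hI hνI (A := {x | H x ≠ ⊤})
    (hH (measurableSet_singleton ⊤).compl) fun i hpi => ?_).resolve_left fun hnull => ?_
  · convert measure_empty (μ := ν)
    exact disjoint_iff_inter_eq_empty.1 (disjoint_left.2 fun x hx hGx => hGx (ne_top_image hpi hx))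
  · refine hlt.not_ge (lintegral_le_of_ae_iSup_fillingScheme_ne_zero hI.measurable hν.stationary
      hf hg hlt.ne_top ?_)
    filter_upwards [compl_mem_ae_iff.2 hnull] with x hx
    rw [mem_compl_iff, mem_ofPred_eq, not_not] at hx
    exact hx.trans_ne ENNReal.top_ne_zero

theorem IsErgodicStationary.exists_potential_le_mul_visits_add (hν : IsErgodicStationary G p ν)
    (hI : IsRecurrent G p I) (hνI : ν I ≠ ⊤) (hf : Measurable f) {B : Set α}
    (hB : MeasurableSet B) {c : ℝ≥0∞} (hc : c ≠ ⊤) (hlt : ∫⁻ x, f x ∂ν < c * ν B) :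
    ∃ H : α → ℝ≥0∞, Measurable H ∧ (∀ᵐ x ∂ν, H x ≠ ⊤) ∧
      ∀ n x, potential G p n f x ≤ c * visits G p B x n + H x := by
  have hind : Measurable (B.indicator (1 : α → ℝ≥0∞)) := measurable_one.indicator hB
  have mul_indicator_ne_top (x : α) : c * B.indicator 1 x ≠ ⊤ :=
    ENNReal.mul_ne_top hc (by by_cases hx : x ∈ B <;> simp [hx])
  obtain ⟨H, hH, hH_ae, hle⟩ := hν.exists_potential_le_add hI hνI hf (hind.const_mul c)
    mul_indicator_ne_top (by rwa [lintegral_const_mul _ hind, lintegral_indicator_one hB])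
  refine ⟨H, hH, hH_ae, fun n x => ?_⟩
  rw [← potential_const_mul]
  exact hle n x

end Comparison

/-! ### Visits with a small preimage -/

section SmallVisits

variable {ι α : Type*} [MeasurableSpace α] {G : ι → α → α} {p : ι → ℝ≥0∞} {ν : Measure α}
  {I : Set α}

open Classical in
/-- `smallVisit ν δ J x g` counts a visit of `g x` to `J` for which `g ⁻¹' J` has measure less
than `δ`. -/
noncomputable def smallVisit (ν : Measure α) (δ : ℝ≥0∞) (J : Set α) (x : α) (g : α → α) : ℝ≥0∞ :=
  if g x ∈ J ∧ ν (g ⁻¹' J) < δ then 1 else 0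

open Classical in
/-- The chain is run backwards from `J`, replacing `J` by its preimages, for fewer than `n` steps
and until the preimage has measure less than `δ`; `smallPullback G p ν δ n J x` is the probability
that this happens and that `x` lies in that preimage. -/
noncomputable def smallPullback (G : ι → α → α) (p : ι → ℝ≥0∞) (ν : Measure α) (δ : ℝ≥0∞) :
    ℕ → Set α → α → ℝ≥0∞
  | 0, _ => 0
  | n + 1, J => if ν J < δ then J.indicator 1
      else fun x => ∑' i, p i * smallPullback G p ν δ n (G i ⁻¹' J) x

theorem smallPullback_monotone (δ : ℝ≥0∞) (J : Set α) :
    Monotone fun n => smallPullback G p ν δ n J := by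
  refine monotone_nat_of_le_succ fun n => ?_
  induction n generalizing J with
  | zero => exact fun _ => zero_le
  | succ n ih =>
    rw [smallPullback, smallPullback]
    split_ifs
    · exact le_rfl
    · intro x
      dsimp only
      gcongr
      exact ih _ x

/-- Before the first small preimage there is no small visit; after it, `smallPullback` counts
all visits. -/
theorem pathSum_smallVisit_le (δ : ℝ≥0∞) (n : ℕ) (J : Set α) (x : α) :
    pathSum G p n (smallVisit ν δ J x) ≤ potential G p n (smallPullback G p ν δ n J) x := by
  induction n generalizing J with
  | zero => exact zero_le
  | succ n ih =>
    by_cases h : ν J < δ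
    · refine pathSum_mono (C := fun _ => True) trivial (fun _ _ _ => trivial) _ fun g _ => ?_
      simp only [smallPullback, if_pos h, smallVisit]
      split_ifs with hg
      · rw [indicator_of_mem hg.1, Pi.one_apply]
      · exact zero_le
    · have smallVisit_id : smallVisit ν δ J x id = 0 := if_neg fun hx => h hx.2
      calc pathSum G p (n + 1) (smallVisit ν δ J x)
          = ∑' i, p i * pathSum G p n (smallVisit ν δ (G i ⁻¹' J) x) := by
            rw [pathSum, smallVisit_id, zero_add]
            rfl
        _ ≤ ∑' i, p i * potential G p n (smallPullback G p ν δ n (G i ⁻¹' J)) x := by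
            gcongr
            exact ih _
        _ = potential G p n (smallPullback G p ν δ (n + 1) J) x := by
            simp only [smallPullback, if_neg h, potential, pathSum_tsum, pathSum_const_mul]
        _ ≤ potential G p (n + 1) (smallPullback G p ν δ (n + 1) J) x :=
            potential_monotone _ n.le_succ x

variable [Countable ι]

theorem measurable_smallPullback (hG : ∀ i, Measurable (G i)) (δ : ℝ≥0∞) (n : ℕ) {J : Set α}
    (hJ : MeasurableSet J) : Measurable (smallPullback G p ν δ n J) := by
  induction n generalizing J with
  | zero => exact measurable_const
  | succ n ih =>
    rw [smallPullback]
    split_ifs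
    · exact measurable_one.indicator hJ
    · exact .tsum fun i => (ih (hG i hJ)).const_mul _

theorem lintegral_smallPullback_le (hG : ∀ i, Measurable (G i)) (hp : ∑' i, p i ≤ 1) (δ : ℝ≥0∞)
    (n : ℕ) {J : Set α} (hJ : MeasurableSet J) : ∫⁻ x, smallPullback G p ν δ n J x ∂ν ≤ δ := by
  induction n generalizing J with
  | zero => simp [smallPullback]
  | succ n ih =>
    rw [smallPullback]
    split_ifs with h
    · exact (lintegral_indicator_one hJ).trans_le h.le
    · have hm (i : ι) : Measurable (smallPullback G p ν δ n (G i ⁻¹' J)) :=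
        measurable_smallPullback hG δ n (hG i hJ)
      calc ∫⁻ x, ∑' i, p i * smallPullback G p ν δ n (G i ⁻¹' J) x ∂ν
          = ∑' i, p i * ∫⁻ x, smallPullback G p ν δ n (G i ⁻¹' J) x ∂ν := by
            simp only [lintegral_tsum fun i => ((hm i).const_mul _).aemeasurable,
              lintegral_const_mul _ (hm _)]
        _ ≤ ∑' i, p i * δ := by
            gcongr with i
            exact ih (hG i hJ)
        _ ≤ δ := by
            rw [ENNReal.tsum_mul_right]
            exact mul_le_of_le_one_left' hp

theorem IsErgodicStationary.exists_pathSum_smallVisit_le_add [SigmaFinite ν]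
    (hν : IsErgodicStationary G p ν) (hI : IsRecurrent G p I) (hνI : ν I ≠ ⊤)
    (hp : ∑' i, p i ≤ 1) {δ c : ℝ≥0∞} (hc : c ≠ ⊤) (hδ : δ < c * ν I) :
    ∃ H : α → ℝ≥0∞, Measurable H ∧ (∀ᵐ x ∂ν, H x ≠ ⊤) ∧
      ∀ n x, pathSum G p n (smallVisit ν δ I x) ≤ c * visits G p I x n + H x := by
  have hm (n : ℕ) : Measurable (smallPullback G p ν δ n I) :=
    measurable_smallPullback hI.measurable δ n hI.measurableSet
  have lintegral_lt : ∫⁻ x, ⨆ n, smallPullback G p ν δ n I x ∂ν < c * ν I := by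
    rw [lintegral_iSup hm (smallPullback_monotone δ I)]
    exact (iSup_le fun n => lintegral_smallPullback_le hI.measurable hp δ n
      hI.measurableSet).trans_lt hδ
  obtain ⟨H, hH, hH_ae, hle⟩ := hν.exists_potential_le_mul_visits_add hI hνI (Measurable.iSup hm)
    hI.measurableSet hc lintegral_lt
  refine ⟨H, hH, hH_ae, fun n x => ?_⟩
  calc pathSum G p n (smallVisit ν δ I x)
      ≤ potential G p n (smallPullback G p ν δ n I) x := pathSum_smallVisit_le δ n I x
    _ ≤ potential G p n (fun y => ⨆ n, smallPullback G p ν δ n I y) x :=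
        potential_mono n (fun y => le_iSup (fun n => smallPullback G p ν δ n I y) n) x
    _ ≤ c * visits G p I x n + H x := hle n x

end SmallVisits

/-! ### Comparison up to constants -/

/-- `LeUpToConst u v` means that `u` is bounded by `v` up to a finite additive constant. -/
def LeUpToConst (u v : ℕ → ℝ≥0∞) : Prop := ∃ K : ℝ≥0, ∀ n, u n ≤ v n + K

namespace LeUpToConst

variable {u v w u' v' : ℕ → ℝ≥0∞}

theorem of_forall_le {K : ℝ≥0∞} (hK : K ≠ ⊤) (h : ∀ n, u n ≤ v n + K) : LeUpToConst u v :=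
  ⟨K.toNNReal, by rwa [ENNReal.coe_toNNReal hK]⟩

theorem of_le (h : u ≤ v) : LeUpToConst u v := ⟨0, fun n => by simpa using h n⟩

theorem trans (huv : LeUpToConst u v) (hvw : LeUpToConst v w) : LeUpToConst u w := by
  obtain ⟨K, hK⟩ := huv
  obtain ⟨K', hK'⟩ := hvw
  refine ⟨K' + K, fun n => (hK n).trans ?_⟩
  grw [hK' n, ENNReal.coe_add, add_assoc]

theorem add (h : LeUpToConst u v) (h' : LeUpToConst u' v') : LeUpToConst (u + u') (v + v') := by
  obtain ⟨K, hK⟩ := h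
  obtain ⟨K', hK'⟩ := h'
  refine ⟨K + K', fun n => (add_le_add (hK n) (hK' n)).trans_eq ?_⟩
  rw [ENNReal.coe_add, add_add_add_comm, Pi.add_apply]

theorem sum {κ : Type*} {s : Finset κ} {u v : κ → ℕ → ℝ≥0∞}
    (h : ∀ k ∈ s, LeUpToConst (u k) (v k)) : LeUpToConst (∑ k ∈ s, u k) (∑ k ∈ s, v k) := by
  induction s using Finset.cons_induction with
  | empty => exact of_le le_rfl
  | cons k s hk ih =>
    rw [Finset.sum_cons, Finset.sum_cons]
    exact (h k (Finset.mem_cons_self k s)).add (ih fun j hj => h j (Finset.mem_cons_of_mem hj))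

theorem const_smul {c : ℝ≥0∞} (hc : c ≠ ⊤) (h : LeUpToConst u v) :
    LeUpToConst (c • u) (c • v) := by
  obtain ⟨K, hK⟩ := h
  refine of_forall_le (ENNReal.mul_ne_top hc (ENNReal.coe_ne_top (r := K))) fun n => ?_
  simp only [Pi.smul_apply, smul_eq_mul, ← mul_add]
  gcongr
  exact hK n

theorem of_half_smul_add (hu : ∀ n, u n ≠ ⊤)
    (h : LeUpToConst u ((2⁻¹ : ℝ≥0∞) • u + v)) : LeUpToConst u ((2 : ℝ≥0∞) • v) := by
  obtain ⟨K, hK⟩ := h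
  refine of_forall_le (ENNReal.mul_ne_top (a := 2) (by simp) (ENNReal.coe_ne_top (r := K)))
    fun n => ?_
  have half_le : 2⁻¹ * u n ≤ v n + K := by
    refine (ENNReal.add_le_add_iff_left (ENNReal.mul_ne_top (a := 2⁻¹) (by simp) (hu n))).1 ?_
    rw [← add_mul, ENNReal.inv_two_add_inv_two, one_mul, ← add_assoc]
    exact hK n
  calc u n = 2 * (2⁻¹ * u n) := by
        rw [← mul_assoc, ENNReal.mul_inv_cancel (by simp) (by simp), one_mul]
    _ ≤ 2 * (v n + K) := by gcongr
    _ = ((2 : ℝ≥0∞) • v) n + 2 * K := mul_add _ _ _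

end LeUpToConst

section SupVisits

variable {ι α : Type*} {G : ι → α → α} {p : ι → ℝ≥0∞} {I B : Set α}

/-- The supremum, over starting points in `B`, of the expected number of visits to `I`. -/
noncomputable def supVisits (G : ι → α → α) (p : ι → ℝ≥0∞) (I B : Set α) (n : ℕ) : ℝ≥0∞ :=
  ⨆ y ∈ B, visits G p I y n

theorem visits_le_supVisits {q : α} (hq : q ∈ B) (n : ℕ) :
    visits G p I q n ≤ supVisits G p I B n :=
  le_iSup₂ (f := fun y (_ : y ∈ B) => visits G p I y n) q hq

theorem mul_supVisits_le {n : ℕ} {c M : ℝ≥0∞} (h : ∀ q ∈ B, c * visits G p I q n ≤ M) :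
    c * supVisits G p I B n ≤ M := by
  simp only [supVisits, ENNReal.mul_iSup]
  exact iSup₂_le h

theorem supVisits_ne_top (hp : ∑' i, p i ≤ 1) (n : ℕ) : supVisits G p I B n ≠ ⊤ :=
  ne_top_of_le_ne_top (ENNReal.natCast_ne_top n)
    (iSup₂_le fun q _ => visits_le_natCast hp I q n)

end SupVisits

section VisitComparison

variable {ι α : Type*} [Countable ι] [MeasurableSpace α] {G : ι → α → α} {p : ι → ℝ≥0∞}
  {ν : Measure α} [SigmaFinite ν] {I S B : Set α}

theorem IsErgodicStationary.ae_leUpToConst_visits (hν : IsErgodicStationary G p ν)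
    (hI : IsRecurrent G p I) (hνI : ν I ≠ ⊤) (hS : MeasurableSet S) (hB : MeasurableSet B)
    {c : ℝ≥0∞} (hc : c ≠ ⊤) (hlt : ν S < c * ν B) :
    ∀ᵐ x ∂ν, LeUpToConst (visits G p S x) (c • visits G p B x) := by
  obtain ⟨H, -, hH_ae, hle⟩ := hν.exists_potential_le_mul_visits_add hI hνI
    (measurable_one.indicator hS) hB hc (by rwa [lintegral_indicator_one hS])
  filter_upwards [hH_ae] with x hx
  exact .of_forall_le hx fun n => hle n x

theorem IsErgodicStationary.ae_leUpToConst_pathSum_smallVisit (hν : IsErgodicStationary G p ν)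
    (hI : IsRecurrent G p I) (hνI : ν I ≠ ⊤) (hp : ∑' i, p i ≤ 1) {δ c : ℝ≥0∞} (hc : c ≠ ⊤)
    (hδ : δ < c * ν I) :
    ∀ᵐ x ∂ν, LeUpToConst (fun n => pathSum G p n (smallVisit ν δ I x)) (c • visits G p I x) := by
  obtain ⟨H, -, hH_ae, hle⟩ := hν.exists_pathSum_smallVisit_le_add hI hνI hp hc hδ
  filter_upwards [hH_ae] with x hx
  exact .of_forall_le hx fun n => hle n x

theorem IsErgodicStationary.exists_ae_leUpToConst_supVisits (hν : IsErgodicStationary G p ν)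
    (hI : IsRecurrent G p I) (hνI : ν I ≠ ⊤) (hp : ∑' i, p i ≤ 1) (hB : MeasurableSet B)
    (hBI : B ⊆ I) (hνB : ν B ≠ 0) :
    ∃ C : ℝ≥0, 0 < C ∧
      ∀ᵐ x ∂ν, LeUpToConst (visits G p I x) ((C : ℝ≥0∞) • supVisits G p I B) := by
  have hνB_top : ν B ≠ ⊤ := ne_top_of_le_ne_top hνI (measure_mono hBI)
  obtain ⟨C, hC, -⟩ := ENNReal.lt_iff_exists_nnreal_btwn.1 (ENNReal.div_lt_top hνI hνB)
  refine ⟨C, ENNReal.coe_pos.1 (zero_le.trans_lt hC), ?_⟩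
  filter_upwards [hν.ae_leUpToConst_visits hI hνI hI.measurableSet hB ENNReal.coe_ne_top
    ((ENNReal.div_lt_iff (.inl hνB) (.inl hνB_top)).1 hC)] with x hx
  have hle : visits G p B x ≤ supVisits G p I B := fun n =>
    (visits_le_iSup hp B x n).trans (iSup₂_mono fun y _ => visits_mono hBI y n)
  exact hx.trans ((LeUpToConst.of_le hle).const_smul ENNReal.coe_ne_top)

theorem exists_measurableSet_forall_le {ν : Measure α} {J : Set α} (hJ : MeasurableSet J)
    (hνJ : ν J ≠ 0) {H : α → ℝ≥0∞} (hH : Measurable H) (hH_ae : ∀ᵐ x ∂ν, H x ≠ ⊤) :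
    ∃ B ⊆ J, MeasurableSet B ∧ ν B ≠ 0 ∧ ∃ K : ℝ≥0, ∀ x ∈ B, H x ≤ K := by
  by_contra! hcon
  have measure_inter_eq_zero (k : ℕ) : ν (J ∩ {x | H x ≤ k}) = 0 := by
    by_contra hne
    obtain ⟨x, hx, hxk⟩ := hcon _ inter_subset_left
      (hJ.inter (measurableSet_le hH measurable_const)) hne k
    exact hxk.not_ge (by simpa using hx.2)
  have measure_iUnion_eq_zero : ν (⋃ k : ℕ, J ∩ {x | H x ≤ k}) = 0 :=
    measure_iUnion_null measure_inter_eq_zero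
  refine hνJ (measure_eq_zero_iff_ae_notMem.2 ?_)
  filter_upwards [hH_ae, measure_eq_zero_iff_ae_notMem.1 measure_iUnion_eq_zero] with x hx hxU hxJ
  obtain ⟨k, hk⟩ := ENNReal.exists_nat_gt hx
  exact hxU (mem_iUnion.2 ⟨k, hxJ, hk.le⟩)

end VisitComparison

/-! ### Monotone maps and interlaced sequences -/

section PairVisits

variable {ι α : Type*} {G : ι → α → α} {p : ι → ℝ≥0∞}

/-- The number of `j < R` with `g (x j) ∈ E₁` plus the number of `j < R` with `g (y j) ∈ E₂`. -/
noncomputable def pairVisits (E₁ E₂ : Set α) (x y : ℕ → α) (R : ℕ) (g : α → α) : ℝ≥0∞ :=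
  ∑ j ∈ Finset.range R, (E₁.indicator 1 (g (x j)) + E₂.indicator 1 (g (y j)))

theorem pathSum_pairVisits (E₁ E₂ : Set α) (x y : ℕ → α) (R n : ℕ) :
    pathSum G p n (pairVisits E₁ E₂ x y R) =
      ∑ j ∈ Finset.range R, (visits G p E₁ (x j) n + visits G p E₂ (y j) n) := by
  unfold pairVisits
  simp only [pathSum_sum, pathSum_add, visits, potential]

end PairVisits

section Interlaced

variable {ι α : Type*} [LinearOrder α] {G : ι → α → α} {p : ι → ℝ≥0∞} {I : Set α} {g : α → α}

section SmallInterval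

variable [MeasurableSpace α] {ν : Measure α} {δ : ℝ≥0∞}

theorem smallVisit_eq_one_or_Icc_subset (hI : I.OrdConnected) {c d q : α} (hcd : ν (Ioo c d) < δ)
    (hg : Monotone g) (hq : g q ∈ I) :
    smallVisit ν δ I q g = 1 ∨ Icc c q ⊆ g ⁻¹' I ∨ Icc q d ⊆ g ⁻¹' I := by
  by_cases hsub : g ⁻¹' I ⊆ Ioo c d
  · exact .inl (if_pos ⟨hq, (measure_mono hsub).trans_lt hcd⟩)
  have hconn : (g ⁻¹' I).OrdConnected := hI.preimage_mono hg
  obtain ⟨z, hz, hzcd⟩ := not_subset.1 hsub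
  obtain hzc | hdz : z ≤ c ∨ d ≤ z := by simpa [or_iff_not_imp_left] using hzcd
  · exact .inr (.inl ((Icc_subset_Icc_left hzc).trans (hconn.out hz hq)))
  · exact .inr (.inr ((Icc_subset_Icc_right hdz).trans (hconn.out hq hz)))

theorem indicator_le_smallVisit_add (hI : I.OrdConnected) {x y z : α} (hxz : ν (Ioo x z) < δ)
    (hg : Monotone g) (hy : y ∈ Icc x z) :
    I.indicator (1 : α → ℝ≥0∞) (g y) ≤
      smallVisit ν δ I y g + (I.indicator 1 (g x) + I.indicator 1 (g z)) := by
  by_cases hgy : g y ∈ I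
  · rw [indicator_of_mem hgy, Pi.one_apply]
    obtain hsmall | hleft | hright := smallVisit_eq_one_or_Icc_subset hI hxz hg hgy
    · simp [hsmall]
    · rw [indicator_of_mem (show g x ∈ I from hleft (left_mem_Icc.2 hy.1))]
      exact le_add_of_le_right le_self_add
    · rw [indicator_of_mem (show g z ∈ I from hright (right_mem_Icc.2 hy.2))]
      exact le_add_of_le_right le_add_self
  · simp [hgy]

theorem leUpToConst_visits_of_mem_Icc (hG : ∀ i, Monotone (G i)) (hp : ∑' i, p i ≤ 1)
    (hI : I.OrdConnected) {x y z : α} (hxz : ν (Ioo x z) < δ) (hy : y ∈ Icc x z)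
    (hsmall : LeUpToConst (fun n => pathSum G p n (smallVisit ν δ I y))
      ((2⁻¹ : ℝ≥0∞) • visits G p I y)) :
    LeUpToConst (visits G p I y) ((2 : ℝ≥0∞) • (visits G p I x + visits G p I z)) := by
  have visits_le : visits G p I y ≤ (fun n => pathSum G p n (smallVisit ν δ I y)) +
      (visits G p I x + visits G p I z) := fun n => by
    simp only [visits, potential, Pi.add_apply, ← pathSum_add]
    exact pathSum_mono monotone_id (fun i g hg => (hG i).comp hg) n
      fun g hg => indicator_le_smallVisit_add hI hxz hg hy
  exact .of_half_smul_add
    (fun n => ne_top_of_le_ne_top (ENNReal.natCast_ne_top n) (visits_le_natCast hp I y n))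
    ((LeUpToConst.of_le visits_le).trans (hsmall.add (.of_le le_rfl)))

end SmallInterval

/-- The sequences `x` and `y` interlace inside `s`: `x 0 < y 0 < x 1 < y 1 < ⋯`, with every `x j`
in `s`. -/
structure Interlaced (s : Set α) (x y : ℕ → α) : Prop where
  mem : ∀ j, x j ∈ s
  lt : ∀ j, x j < y j
  lt_succ : ∀ j, y j < x (j + 1)

theorem Interlaced.mono {s t : Set α} {x y : ℕ → α} (h : Interlaced s x y) (hst : s ⊆ t) :
    Interlaced t x y :=
  ⟨fun j => hst (h.mem j), h.lt, h.lt_succ⟩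

end Interlaced

section Interval

variable {a b r : ℝ} {C₁ C₂ : Set ℝ} {x y : ℕ → ℝ} {g : ℝ → ℝ}

theorem one_le_ofReal_add_indicator (hr : 0 < r) (hC : ∀ u ∈ C₁, ∀ v ∈ C₂, r ≤ dist u v)
    {u v w : ℝ} (hu : u ∈ Icc a b) (hv : v ∈ Icc a b) (huv : u ≤ v) (hvw : v ≤ w) :
    1 ≤ ENNReal.ofReal ((w - u) / r) +
      ((Icc a b \ C₁).indicator (1 : ℝ → ℝ≥0∞) u + (Icc a b \ C₂).indicator 1 v) := by
  by_cases huC : u ∈ C₁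
  · by_cases hvC : v ∈ C₂
    · have hdist : r ≤ v - u := by
        simpa [Real.dist_eq, abs_sub_comm u, abs_of_nonneg (sub_nonneg.2 huv)] using hC u huC v hvC
      refine le_add_of_le_left (ENNReal.one_le_ofReal.2 ((one_le_div hr).2 ?_))
      linarith
    · rw [indicator_of_mem (show v ∈ Icc a b \ C₂ from ⟨hv, hvC⟩)]
      exact le_add_of_le_right le_add_self
  · rw [indicator_of_mem (show u ∈ Icc a b \ C₁ from ⟨hu, huC⟩)]
    exact le_add_of_le_right le_self_add

/-- If `g` squeezes all `x j` into `[a, b]`, then at most `(b - a) / r` of the gaps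
`[g (x j), g (y j)]` have length at least `r`, and each of the others is seen by `pairVisits`. -/
theorem Interlaced.natCast_le_ofReal_add_pairVisits {s : Set ℝ} (h : Interlaced s x y) (hr : 0 < r)
    (hC : ∀ u ∈ C₁, ∀ v ∈ C₂, r ≤ dist u v) (hg : Monotone g) (hs : s ⊆ g ⁻¹' Icc a b) (R : ℕ) :
    (R : ℝ≥0∞) ≤
      ENNReal.ofReal ((b - a) / r) + pairVisits (Icc a b \ C₁) (Icc a b \ C₂) x y R g := by
  have hgx (j : ℕ) : g (x j) ∈ Icc a b := hs (h.mem j)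
  have hgxy (j : ℕ) : g (x j) ≤ g (y j) := hg (h.lt j).le
  have hgyx (j : ℕ) : g (y j) ≤ g (x (j + 1)) := hg (h.lt_succ j).le
  have sum_ofReal_le :
      ∑ j ∈ Finset.range R, ENNReal.ofReal ((g (x (j + 1)) - g (x j)) / r) ≤
        ENNReal.ofReal ((b - a) / r) := by
    rw [← ENNReal.ofReal_sum_of_nonneg fun j _ =>
        div_nonneg (sub_nonneg.2 ((hgxy j).trans (hgyx j))) hr.le,
      ← Finset.sum_div, Finset.sum_range_sub fun j => g (x j)]
    gcongr
    exacts [(hgx R).2, (hgx 0).1]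
  calc (R : ℝ≥0∞) = ∑ j ∈ Finset.range R, 1 := by simp
    _ ≤ ∑ j ∈ Finset.range R, (ENNReal.ofReal ((g (x (j + 1)) - g (x j)) / r) +
          ((Icc a b \ C₁).indicator 1 (g (x j)) + (Icc a b \ C₂).indicator 1 (g (y j)))) :=
        Finset.sum_le_sum fun j _ => one_le_ofReal_add_indicator hr hC (hgx j)
          ⟨(hgx j).1.trans (hgxy j), (hgyx j).trans (hgx (j + 1)).2⟩ (hgxy j) (hgyx j)
    _ ≤ _ := by
        rw [Finset.sum_add_distrib]
        exact add_le_add_left sum_ofReal_le _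

variable {ν : Measure ℝ} {δ : ℝ≥0∞} {c d q : ℝ} {x' y' : ℕ → ℝ}

theorem natCast_mul_indicator_le (hcd : ν (Ioo c d) < δ) (hr : 0 < r)
    (hC : ∀ u ∈ C₁, ∀ v ∈ C₂, r ≤ dist u v) (hleft : Interlaced (Icc c q) x y)
    (hright : Interlaced (Icc q d) x' y') (hg : Monotone g) (R : ℕ) :
    R * (Icc a b).indicator 1 (g q) ≤ R * smallVisit ν δ (Icc a b) q g +
      (ENNReal.ofReal ((b - a) / r) * (Icc a b).indicator 1 (g q) +
        (pairVisits (Icc a b \ C₁) (Icc a b \ C₂) x y R g +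
          pairVisits (Icc a b \ C₁) (Icc a b \ C₂) x' y' R g)) := by
  by_cases hq : g q ∈ Icc a b
  · simp only [indicator_of_mem hq, Pi.one_apply, mul_one]
    obtain hsmall | hsub | hsub := smallVisit_eq_one_or_Icc_subset ordConnected_Icc hcd hg hq
    · simp [hsmall]
    · grw [hleft.natCast_le_ofReal_add_pairVisits hr hC hg hsub R]
      exact le_add_of_le_right (by gcongr; exact le_self_add)
    · grw [hright.natCast_le_ofReal_add_pairVisits hr hC hg hsub R]
      exact le_add_of_le_right (by gcongr; exact le_add_self)
  · simp [hq]

variable {ι : Type*} {G : ι → ℝ → ℝ} {p : ι → ℝ≥0∞}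

theorem natCast_mul_visits_le (hG : ∀ i, Monotone (G i)) (hcd : ν (Ioo c d) < δ) (hr : 0 < r)
    (hC : ∀ u ∈ C₁, ∀ v ∈ C₂, r ≤ dist u v) (hleft : Interlaced (Icc c q) x y)
    (hright : Interlaced (Icc q d) x' y') (R n : ℕ) :
    R * visits G p (Icc a b) q n ≤ R * pathSum G p n (smallVisit ν δ (Icc a b) q) +
      (ENNReal.ofReal ((b - a) / r) * visits G p (Icc a b) q n +
        (pathSum G p n (pairVisits (Icc a b \ C₁) (Icc a b \ C₂) x y R) +
          pathSum G p n (pairVisits (Icc a b \ C₁) (Icc a b \ C₂) x' y' R))) := by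
  simp only [visits, potential, ← pathSum_const_mul, ← pathSum_add]
  exact pathSum_mono monotone_id (fun i g hg => (hG i).comp hg) n
    fun g hg => natCast_mul_indicator_le hcd hr hC hleft hright hg R

end Interval

/-! ### Intervals and supports -/

section Support

open Measure

theorem measure_ne_zero_of_support_subset {α : Type*} [TopologicalSpace α]
    [HereditarilyLindelofSpace α] [MeasurableSpace α] {ν₁ ν₂ : Measure α}
    (hsupp : ν₁.support ⊆ ν₂.support) {U : Set α} (hU : IsOpen U) (h : ν₁ U ≠ 0) : ν₂ U ≠ 0 := by
  obtain ⟨x, hxU, hx⟩ := nonempty_inter_support_of_pos (pos_iff_ne_zero.2 h)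
  exact ((mem_support_iff_forall x).1 (hsupp hx) U (hU.mem_nhds hxU)).ne'

theorem exists_isCompact_le_dist_of_mutuallySingular {α : Type*} [MetricSpace α]
    [MeasurableSpace α] [BorelSpace α] {ν₁ ν₂ : Measure α} [InnerRegularCompactLTTop ν₁]
    [InnerRegularCompactLTTop ν₂] (h : ν₁ ⟂ₘ ν₂) {I : Set α} (hI : MeasurableSet I)
    (h₁I : ν₁ I ≠ ⊤) (h₂I : ν₂ I ≠ ⊤) {ε₁ ε₂ : ℝ≥0∞} (hε₁ : ε₁ ≠ 0) (hε₂ : ε₂ ≠ 0) :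
    ∃ C₁ C₂ : Set α, IsCompact C₁ ∧ IsCompact C₂ ∧ ν₁ (I \ C₁) < ε₁ ∧ ν₂ (I \ C₂) < ε₂ ∧
      ∃ r > 0, ∀ u ∈ C₁, ∀ v ∈ C₂, r ≤ dist u v := by
  obtain ⟨s, hs, h₁s, h₂s⟩ := h
  obtain ⟨C₁, hC₁s, hC₁, hC₁ε⟩ := (hI.diff hs).exists_isCompact_sdiff_lt (μ := ν₁)
    (measure_ne_top_of_subset sdiff_subset h₁I) hε₁
  obtain ⟨C₂, hC₂s, hC₂, hC₂ε⟩ := (hI.inter hs).exists_isCompact_sdiff_lt (μ := ν₂)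
    (measure_ne_top_of_subset inter_subset_left h₂I) hε₂
  have hdisj : Disjoint C₁ C₂ := disjoint_left.2 fun x h₁ h₂ => (hC₁s h₁).2 (hC₂s h₂).2
  obtain ⟨r, hr, hthick⟩ := hdisj.exists_thickenings hC₁ hC₂.isClosed
  refine ⟨C₁, C₂, hC₁, hC₂, ?_, ?_, r, hr, fun u hu v hv => ?_⟩
  · rwa [← measure_sdiff_null h₁s, sdiff_sdiff_comm]
  · rwa [← measure_sdiff_null h₂s, sdiff_sdiff_comm, sdiff_compl]
  · by_contra! hlt
    exact disjoint_left.1 hthick (Metric.self_subset_thickening hr C₁ hu)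
      (Metric.mem_thickening_iff.2 ⟨v, hv, hlt⟩)

variable {α : Type*} [LinearOrder α] [TopologicalSpace α] [OrderTopology α]
  [HereditarilyLindelofSpace α] [MeasurableSpace α] {ν ν₁ ν₂ : Measure α}

theorem exists_Ioo_subset_measure_lt [NullSingletonClass ν₁] [NullSingletonClass ν₂]
    [OuterRegular ν₁] [OuterRegular ν₂] [NoMinOrder α] [NoMaxOrder α] {a b : α}
    (h : ν₁ (Ioo a b) ≠ 0) {δ₁ δ₂ : ℝ≥0∞} (hδ₁ : 0 < δ₁) (hδ₂ : 0 < δ₂) :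
    ∃ c d, Ioo c d ⊆ Ioo a b ∧ ν₁ (Ioo c d) ≠ 0 ∧ ν₁ (Ioo c d) < δ₁ ∧ ν₂ (Ioo c d) < δ₂ := by
  obtain ⟨z, hz, hzsupp⟩ := nonempty_inter_support_of_pos (pos_iff_ne_zero.2 h)
  obtain ⟨U₁, hzU₁, hU₁, hU₁δ⟩ := Set.exists_isOpen_lt_of_lt (μ := ν₁) {z} δ₁ (by simpa using hδ₁)
  obtain ⟨U₂, hzU₂, hU₂, hU₂δ⟩ := Set.exists_isOpen_lt_of_lt (μ := ν₂) {z} δ₂ (by simpa using hδ₂)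
  have mem_nhds : Ioo a b ∩ (U₁ ∩ U₂) ∈ 𝓝 z := (isOpen_Ioo.inter (hU₁.inter hU₂)).mem_nhds
    ⟨hz, singleton_subset_iff.1 hzU₁, singleton_subset_iff.1 hzU₂⟩
  obtain ⟨⟨c, d⟩, hzcd, hcd⟩ := (nhds_basis_Ioo z).mem_iff.1 mem_nhds
  exact ⟨c, d, fun w hw => (hcd hw).1,
    ((mem_support_iff_forall z).1 hzsupp _ (Ioo_mem_nhds hzcd.1 hzcd.2)).ne',
    (measure_mono fun w hw => (hcd hw).2.1).trans_lt hU₁δ,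
    (measure_mono fun w hw => (hcd hw).2.2).trans_lt hU₂δ⟩

variable [DenselyOrdered α]

theorem exists_mem_Ioo_measure_ne_zero [NullSingletonClass ν] {c d : α} (h : ν (Ioo c d) ≠ 0) :
    ∃ e ∈ Ioo c d, ν (Ioo c e) ≠ 0 ∧ ν (Ioo e d) ≠ 0 := by
  have measure_inter : ν (Ioo c d ∩ ν.support) ≠ 0 := by
    rwa [measure_inter_conull measure_compl_support]
  obtain ⟨s, hs, t, ht, hst⟩ : ∃ s ∈ Ioo c d ∩ ν.support, ∃ t ∈ Ioo c d ∩ ν.support, s < t := by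
    by_contra! hle
    exact measure_inter (Subsingleton.measure_zero
      (fun s hs t ht => (hle t ht s hs).antisymm (hle s hs t ht)) ν)
  obtain ⟨e, hse, het⟩ := exists_between hst
  exact ⟨e, ⟨hs.1.1.trans hse, het.trans ht.1.2⟩,
    ((mem_support_iff_forall s).1 hs.2 _ (Ioo_mem_nhds hs.1.1 hse)).ne',
    ((mem_support_iff_forall t).1 ht.2 _ (Ioo_mem_nhds het ht.1.2)).ne'⟩

theorem exists_mem_Ioo_of_ae [NullSingletonClass ν] {P : α → Prop} (hP : ∀ᵐ x ∂ν, P x) {c d : α}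
    (h : ν (Ioo c d) ≠ 0) :
    ∃ x ∈ Ioo c d, P x ∧ ν (Ioo c x) ≠ 0 ∧ ν (Ioo x d) ≠ 0 := by
  obtain ⟨e, he, hce, hed⟩ := exists_mem_Ioo_measure_ne_zero h
  obtain ⟨e', he', hee', he'd⟩ := exists_mem_Ioo_measure_ne_zero hed
  obtain ⟨x, hx, hPx⟩ := (frequently_ae_mem_iff.2 hee').and_eventually hP |>.exists
  exact ⟨x, ⟨he.1.trans hx.1, hx.2.trans he'.2⟩, hPx,
    (measure_pos_of_superset (Ioo_subset_Ioo_right hx.1.le) hce).ne',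
    (measure_pos_of_superset (Ioo_subset_Ioo_left hx.2.le) he'd).ne'⟩

theorem exists_interlaced [NullSingletonClass ν₁] (hsupp : ν₁.support ⊆ ν₂.support)
    {P Q : α → Prop} (hP : ∀ᵐ x ∂ν₁, P x) (hQ : ∀ᵐ y ∂ν₂, Q y) {c d : α}
    (h : ν₁ (Ioo c d) ≠ 0) :
    ∃ x y, Interlaced (Ioo c d) x y ∧ (∀ j, P (x j)) ∧ ∀ j, Q (y j) := by
  let T := {x : α // x ∈ Ioo c d ∧ P x ∧ ν₁ (Ioo x d) ≠ 0}
  have exists_next (x : T) : ∃ (x' : T) (y : α), x.1 < y ∧ y < x'.1 ∧ Q y := by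
    obtain ⟨x', hx', hPx', hleft, hright⟩ := exists_mem_Ioo_of_ae hP x.2.2.2
    have hν₂ : ν₂ (Ioo x.1 x') ≠ 0 := measure_ne_zero_of_support_subset hsupp isOpen_Ioo hleft
    obtain ⟨y, hy, hQy⟩ := (frequently_ae_mem_iff.2 hν₂).and_eventually hQ |>.exists
    exact ⟨⟨x', ⟨x.2.1.1.trans hx'.1, hx'.2⟩, hPx', hright⟩, y, hy.1, hy.2, hQy⟩
  choose next y hlt hlt_next hQy using exists_next
  obtain ⟨x₀, hx₀, hPx₀, -, hx₀d⟩ := exists_mem_Ioo_of_ae hP h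
  let x (j : ℕ) : T := next^[j] ⟨x₀, hx₀, hPx₀, hx₀d⟩
  have x_succ (j : ℕ) : x (j + 1) = next (x j) := iterate_succ_apply' next j _
  exact ⟨fun j => x j, fun j => y (x j), ⟨fun j => (x j).2.1, fun j => hlt _,
    fun j => x_succ j ▸ hlt_next _⟩, fun j => (x j).2.2.1, fun j => hQy _⟩

end Support

/-! ### Excluding mutual singularity -/

section NotMutuallySingular

variable {ι : Type*} {G : ι → ℝ → ℝ} {p : ι → ℝ≥0∞} {ν ν₁ ν₂ : Measure ℝ} {a b c d r : ℝ}

theorem IsRecurrent.not_leUpToConst_smul_supVisits_zero {α : Type*} [MeasurableSpace α]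
    {G : ι → α → α} {I B : Set α} (hI : IsRecurrent G p I) (hB : B.Nonempty) {c : ℝ≥0∞}
    (hc : c ≠ 0) : ¬ LeUpToConst (c • supVisits G p I B) 0 := by
  rintro ⟨K, hK⟩
  obtain ⟨q, hq⟩ := hB
  have mul_iSup_le : c * ⨆ n, visits G p I q n ≤ K := by
    rw [ENNReal.mul_iSup]
    refine iSup_le fun n => (mul_le_mul_right (visits_le_supVisits hq n) c).trans ?_
    simpa using hK n
  rw [hI.iSup_visits q, ENNReal.mul_top hc] at mul_iSup_le
  exact ENNReal.coe_ne_top (top_le_iff.1 mul_iSup_le)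

/-- Absorbing `(1/4 + 1/8 + 1/16 + 1/16) • supVisits = (1/2) • supVisits` on the left. -/
theorem leUpToConst_smul_supVisits_zero (hG : ∀ i, Monotone (G i)) (hp : ∑' i, p i ≤ 1) {δ : ℝ≥0∞}
    (hcd : ν (Ioo c d) < δ) {C₁ C₂ : Set ℝ} (hr : 0 < r)
    (hC : ∀ u ∈ C₁, ∀ v ∈ C₂, r ≤ dist u v) {e₁ e₂ : ℝ} {B : Set ℝ} (hB : B ⊆ Icc e₁ e₂) {K : ℝ≥0}
    (hsmall : ∀ q ∈ B, ∀ n, pathSum G p n (smallVisit ν δ (Icc a b) q) ≤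
      4⁻¹ * visits G p (Icc a b) q n + K)
    {x y x' y' : ℕ → ℝ} (hleft : Interlaced (Icc c e₁) x y) (hright : Interlaced (Icc e₂ d) x' y')
    {R : ℕ} (hR : ENNReal.ofReal ((b - a) / r) ≤ 8⁻¹ * R)
    (hleft_le : LeUpToConst
      (fun n => pathSum G p n (pairVisits (Icc a b \ C₁) (Icc a b \ C₂) x y R))
      ((16⁻¹ * R : ℝ≥0∞) • supVisits G p (Icc a b) B))
    (hright_le : LeUpToConst
      (fun n => pathSum G p n (pairVisits (Icc a b \ C₁) (Icc a b \ C₂) x' y' R))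
      ((16⁻¹ * R : ℝ≥0∞) • supVisits G p (Icc a b) B)) :
    LeUpToConst ((R : ℝ≥0∞) • supVisits G p (Icc a b) B) 0 := by
  set A := supVisits G p (Icc a b) B
  have natCast_mul_le : LeUpToConst ((R : ℝ≥0∞) • A) ((R : ℝ≥0∞) • ((4⁻¹ : ℝ≥0∞) • A) +
      ((8⁻¹ * R : ℝ≥0∞) • A +
        ((fun n => pathSum G p n (pairVisits (Icc a b \ C₁) (Icc a b \ C₂) x y R)) +
          fun n => pathSum G p n (pairVisits (Icc a b \ C₁) (Icc a b \ C₂) x' y' R)))) := by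
    refine .of_forall_le (K := R * K) (by finiteness) fun n => ?_
    simp only [Pi.smul_apply, smul_eq_mul, Pi.add_apply]
    refine mul_supVisits_le fun q hq => ?_
    grw [natCast_mul_visits_le hG hcd hr hC (hleft.mono (Icc_subset_Icc_right (hB hq).1))
      (hright.mono (Icc_subset_Icc_left (hB hq).2)) R n, hsmall q hq n, hR,
      visits_le_supVisits hq n]
    rw [mul_add, add_right_comm]
  have sum_coeff : (4⁻¹ + (8⁻¹ + (16⁻¹ + 16⁻¹)) : ℝ≥0∞) = 2⁻¹ := by
    rw [← ENNReal.toReal_eq_toReal_iff' (by finiteness) (by finiteness)]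
    norm_num [ENNReal.toReal_add]
  have absorb : (R : ℝ≥0∞) • ((4⁻¹ : ℝ≥0∞) • A) + ((8⁻¹ * R : ℝ≥0∞) • A +
      ((16⁻¹ * R : ℝ≥0∞) • A + (16⁻¹ * R : ℝ≥0∞) • A)) =
      (2⁻¹ : ℝ≥0∞) • ((R : ℝ≥0∞) • A) + 0 := by
    rw [← sum_coeff]
    module
  have hle := natCast_mul_le.trans
    (.add (.of_le le_rfl) (.add (.of_le le_rfl) (hleft_le.add hright_le)))
  rw [absorb] at hle
  exact (hle.of_half_smul_add fun n => ENNReal.mul_ne_top (by simp) (supVisits_ne_top hp n)).trans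
    (.of_le (smul_zero _).le)

variable [Countable ι] [IsLocallyFiniteMeasure ν₁] [IsLocallyFiniteMeasure ν₂]
  [NullSingletonClass ν₁] {I : Set ℝ}

namespace IsErgodicStationary

/-- Each `y j` lies between `x j` and `x (j + 1)`, whose visits control those of `y j`; this is how
a bound `u` that holds only `ν₁`-almost everywhere is transferred to `ν₂`-generic points. -/
theorem exists_interlaced_leUpToConst (h₁ : IsErgodicStationary G p ν₁)
    (h₂ : IsErgodicStationary G p ν₂) (hG : ∀ i, Monotone (G i)) (hI : IsRecurrent G p I)
    (hI_conn : I.OrdConnected) (h₁I : ν₁ I ≠ ⊤) (h₂I : ν₂ I ≠ ⊤) (hp : ∑' i, p i ≤ 1)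
    (hsupp : ν₁.support ⊆ ν₂.support) {u : ℕ → ℝ≥0∞}
    (hu : ∀ᵐ x ∂ν₁, LeUpToConst (visits G p I x) u) {E₁ E₂ : Set ℝ} (hE₁ : MeasurableSet E₁)
    (hE₂ : MeasurableSet E₂) {t δ : ℝ≥0∞} (ht : t ≠ ⊤) (h₁E : ν₁ E₁ < t * ν₁ I)
    (h₂E : ν₂ E₂ < t * ν₂ I) (hδ : δ < 2⁻¹ * ν₂ I) (h₁cd : ν₁ (Ioo c d) ≠ 0)
    (h₂cd : ν₂ (Ioo c d) < δ) :
    ∃ x y, Interlaced (Ioo c d) x y ∧ ∀ R : ℕ,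
      LeUpToConst (fun n => pathSum G p n (pairVisits E₁ E₂ x y R)) ((5 * t * R) • u) := by
  obtain ⟨x, y, hxy, hx, hy⟩ := exists_interlaced hsupp
    (hu.and (h₁.ae_leUpToConst_visits hI h₁I hE₁ hI.measurableSet ht h₁E))
    ((h₂.ae_leUpToConst_pathSum_smallVisit hI h₂I hp (by simp) hδ).and
      (h₂.ae_leUpToConst_visits hI h₂I hE₂ hI.measurableSet ht h₂E)) h₁cd
  have visits_x (j : ℕ) : LeUpToConst (visits G p E₁ (x j)) (t • u) :=
    (hx j).2.trans ((hx j).1.const_smul ht)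
  have visits_y (j : ℕ) : LeUpToConst (visits G p E₂ (y j)) (t • ((2 : ℝ≥0∞) • (u + u))) := by
    have hgap : ν₂ (Ioo (x j) (x (j + 1))) < δ :=
      (measure_mono (Ioo_subset_Ioo (hxy.mem j).1.le (hxy.mem (j + 1)).2.le)).trans_lt h₂cd
    have hvisits := leUpToConst_visits_of_mem_Icc hG hp hI_conn hgap
      ⟨(hxy.lt j).le, (hxy.lt_succ j).le⟩ (hy j).1
    exact (hy j).2.trans ((hvisits.trans
      (((hx j).1.add (hx (j + 1)).1).const_smul (by simp))).const_smul ht)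
  refine ⟨x, y, hxy, fun R => ?_⟩
  have hsum := LeUpToConst.sum fun j (_ : j ∈ Finset.range R) => (visits_x j).add (visits_y j)
  convert hsum using 1
  · ext n
    simp [pathSum_pairVisits]
  · ext n
    simp only [Pi.smul_apply, smul_eq_mul, Finset.sum_apply, Pi.add_apply, Finset.sum_const,
      Finset.card_range, nsmul_eq_mul]
    ring

theorem exists_separated_forall_exists_interlaced (h₁ : IsErgodicStationary G p ν₁)
    (h₂ : IsErgodicStationary G p ν₂) (hG : ∀ i, Monotone (G i)) (hI : IsRecurrent G p I)
    (hI_conn : I.OrdConnected) (h₁I : ν₁ I ≠ ⊤) (h₂I : ν₂ I ≠ ⊤) (h₁I_pos : ν₁ I ≠ 0)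
    (h₂I_pos : ν₂ I ≠ 0) (hp : ∑' i, p i ≤ 1) (hsupp : ν₁.support ⊆ ν₂.support)
    (hsing : ν₁ ⟂ₘ ν₂) {u : ℕ → ℝ≥0∞} {C : ℝ≥0} (hC : 0 < C)
    (hu : ∀ᵐ x ∂ν₁, LeUpToConst (visits G p I x) ((C : ℝ≥0∞) • u))
    {t δ : ℝ≥0∞} (ht_pos : t ≠ 0) (ht : t ≠ ⊤) (hδ : δ < 2⁻¹ * ν₂ I) :
    ∃ (C₁ C₂ : Set ℝ) (r : ℝ), 0 < r ∧ (∀ u ∈ C₁, ∀ v ∈ C₂, r ≤ dist u v) ∧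
      ∀ c d, ν₁ (Ioo c d) ≠ 0 → ν₂ (Ioo c d) < δ →
        ∃ x y, Interlaced (Ioo c d) x y ∧ ∀ R : ℕ,
          LeUpToConst (fun n => pathSum G p n (pairVisits (I \ C₁) (I \ C₂) x y R))
            ((t * R) • u) := by
  have h5C : (5 * C : ℝ≥0∞) ≠ 0 := mul_ne_zero (by simp) (by simpa using hC.ne')
  have hs : t / (5 * C) ≠ ⊤ := ENNReal.div_ne_top ht h5C
  have hs_pos : t / (5 * C) ≠ 0 := (ENNReal.div_pos ht_pos (by finiteness)).ne'
  obtain ⟨C₁, C₂, hC₁, hC₂, h₁C, h₂C, r, hr, hsep⟩ :=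
    exists_isCompact_le_dist_of_mutuallySingular hsing hI.measurableSet h₁I h₂I
      (mul_ne_zero hs_pos h₁I_pos) (mul_ne_zero hs_pos h₂I_pos)
  refine ⟨C₁, C₂, r, hr, hsep, fun c d h₁cd h₂cd => ?_⟩
  obtain ⟨x, y, hxy, hle⟩ := h₁.exists_interlaced_leUpToConst h₂ hG hI hI_conn h₁I h₂I hp hsupp hu
    (hI.measurableSet.diff hC₁.measurableSet) (hI.measurableSet.diff hC₂.measurableSet)
    hs h₁C h₂C hδ h₁cd h₂cd
  refine ⟨x, y, hxy, fun R => (hle R).trans (.of_le (le_of_eq ?_))⟩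
  rw [smul_smul]
  congr 1
  calc 5 * (t / (5 * C)) * R * C = 5 * C * (t / (5 * C)) * R := by ring
    _ = t * R := by rw [ENNReal.mul_div_cancel h5C (by finiteness)]

theorem not_mutuallySingular [NullSingletonClass ν₂] (h₁ : IsErgodicStationary G p ν₁)
    (h₂ : IsErgodicStationary G p ν₂) (hG : ∀ i, Monotone (G i))
    (hI : IsRecurrent G p (Icc a b)) (hp : ∑' i, p i ≤ 1) (hsupp : ν₁.support ⊆ ν₂.support)
    (hab : ν₁ (Ioo a b) ≠ 0) : ¬ ν₁ ⟂ₘ ν₂ := by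
  intro hsing
  have h₁I : ν₁ (Icc a b) ≠ ⊤ := isCompact_Icc.measure_ne_top
  have h₂I : ν₂ (Icc a b) ≠ ⊤ := isCompact_Icc.measure_ne_top
  have h₁I_pos : ν₁ (Icc a b) ≠ 0 := (measure_pos_of_superset Ioo_subset_Icc_self hab).ne'
  have h₂I_pos : ν₂ (Icc a b) ≠ 0 := (measure_pos_of_superset Ioo_subset_Icc_self
    (measure_ne_zero_of_support_subset hsupp isOpen_Ioo hab)).ne'
  obtain ⟨δ₁, hδ₁_pos, hδ₁⟩ := exists_between (ENNReal.mul_pos (a := 4⁻¹) (by simp) h₁I_pos)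
  obtain ⟨δ₂, hδ₂_pos, hδ₂⟩ := exists_between (ENNReal.mul_pos (a := 2⁻¹) (by simp) h₂I_pos)
  obtain ⟨c, d, hcd_sub, hcd, h₁cd, h₂cd⟩ :=
    exists_Ioo_subset_measure_lt (ν₁ := ν₁) (ν₂ := ν₂) hab hδ₁_pos hδ₂_pos
  obtain ⟨e₁, he₁, hce₁, he₁d⟩ := exists_mem_Ioo_measure_ne_zero hcd
  obtain ⟨e₂, he₂, he₁e₂, he₂d⟩ := exists_mem_Ioo_measure_ne_zero he₁d
  obtain ⟨H, hH, hH_ae, hsmall⟩ := h₁.exists_pathSum_smallVisit_le_add hI h₁I hp (by simp) hδ₁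
  obtain ⟨B, hBe, hB, hνB, K, hHK⟩ :=
    exists_measurableSet_forall_le measurableSet_Ioo he₁e₂ hH hH_ae
  have hBI : B ⊆ Icc a b := (hBe.trans (Ioo_subset_Ioo he₁.1.le he₂.2.le)).trans
    (hcd_sub.trans Ioo_subset_Icc_self)
  obtain ⟨C, hC_pos, hC⟩ := h₁.exists_ae_leUpToConst_supVisits hI h₁I hp hB hBI hνB
  obtain ⟨C₁, C₂, r, hr, hsep, hpairs⟩ := h₁.exists_separated_forall_exists_interlaced h₂ hG hI
    ordConnected_Icc h₁I h₂I h₁I_pos h₂I_pos hp hsupp hsing hC_pos hC (t := 16⁻¹) (by simp)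
    (by simp) hδ₂
  obtain ⟨x, y, hxy, hleft⟩ := hpairs c e₁ hce₁
    ((measure_mono (Ioo_subset_Ioo_right he₁.2.le)).trans_lt h₂cd)
  obtain ⟨x', y', hxy', hright⟩ := hpairs e₂ d he₂d
    ((measure_mono (Ioo_subset_Ioo_left (he₁.1.trans he₂.1).le)).trans_lt h₂cd)
  obtain ⟨R, hR⟩ := ENNReal.exists_nat_gt (r := 8 * ENNReal.ofReal ((b - a) / r)) (by finiteness)
  have hR_le : ENNReal.ofReal ((b - a) / r) ≤ 8⁻¹ * R := by
    rw [mul_comm, ← div_eq_mul_inv, ENNReal.le_div_iff_mul_le (by simp) (by simp), mul_comm]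
    exact hR.le
  exact hI.not_leUpToConst_smul_supVisits_zero (nonempty_of_measure_ne_zero hνB)
    (zero_le.trans_lt hR).ne' (leUpToConst_smul_supVisits_zero hG hp h₁cd hr hsep
      (hBe.trans Ioo_subset_Icc_self)
      (fun q hq n => (hsmall n q).trans (add_le_add_right (hHK q hq) _))
      (hxy.mono Ioo_subset_Icc_self) (hxy'.mono Ioo_subset_Icc_self) hR_le (hleft R) (hright R))

end IsErgodicStationary

end NotMutuallySingular

/-! ### Recurrence of the chain -/

section Recurrence

variable {ι : Type*} {G : ι → ℝ → ℝ} {p : ι → ℝ≥0∞}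

theorem potential_eq_sum_iterate {α : Type*} {G : ι → α → α} (n : ℕ) (f : α → ℝ≥0∞) (x : α) :
    potential G p n f x = ∑ k ∈ Finset.range n, (transitionOp G p)^[k] f x := by
  induction n generalizing f with
  | zero => simp [potential, pathSum]
  | succ n ih => rw [potential_succ', ih, Finset.sum_range_succ', add_comm]; rfl

theorem chain_congr {ω c : ℕ → ι} {n : ℕ} (h : ∀ k < n, ω k = c k) (x : ℝ) :
    chain G ω x n = chain G c x n := by
  induction n with
  | zero => rfl
  | succ n ih => rw [chain, chain, ih fun k hk => h k (hk.trans n.lt_succ_self), h n n.lt_succ_self]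

theorem chain_update_succ (c : ℕ → ι) (i : ι) (x : ℝ) (n : ℕ) :
    chain G (update c n i) x (n + 1) = G i (chain G c x n) := by
  rw [chain, update_self, chain_congr fun k hk => update_of_ne hk.ne _ _]

theorem prod_range_succ_update {M : Type*} [CommMonoid M] (f : ι → M) (c : ℕ → ι) (i : ι)
    (n : ℕ) : ∏ k ∈ Finset.range (n + 1), f (update c n i k) =
      (∏ k ∈ Finset.range n, f (c k)) * f i := by
  rw [Finset.prod_range_succ, update_self]
  exact congrArg (· * f i)
    (Finset.prod_congr rfl fun k hk => by rw [update_of_ne (Finset.mem_range.1 hk).ne])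

variable [MeasurableSpace ι] {μm : Measure ι} {Q : Measure (ℕ → ι)}

theorem preimage_comp_eq_of_measurableSet {κ : Type*} {f : ι → ι}
    (hf : ∀ S, MeasurableSet S → f ⁻¹' S = S) {S : Set (κ → ι)} (hS : MeasurableSet S) :
    (f ∘ ·) ⁻¹' S = S := by
  have pi_le : MeasurableSpace.pi ≤ MeasurableSpace.invariants fun ω : κ → ι => f ∘ ω := by
    refine iSup_le fun k => ?_
    rintro _ ⟨A, hA, rfl⟩
    refine ⟨measurable_pi_apply k hA, ?_⟩
    rw [← preimage_comp]
    exact congrArg (fun A => (fun ω : κ → ι => ω k) ⁻¹' A) (hf A hA)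
  exact (pi_le S hS).2

/-- Redirecting `j` to `i` moves every path into the set but preserves all measurable sets. -/
theorem measure_setOf_forall_ne_eq_univ {κ : Type*} {Q : Measure (κ → ι)} {i j : ι} (hij : i ≠ j)
    (hj : j ∈ measurableAtom i) : Q {ω | ∀ k, ω k ≠ j} = Q univ := by
  classical
  have preimage_eq (S : Set ι) (hS : MeasurableSet S) : update id j i ⁻¹' S = S := by
    have mem_iff : i ∈ S ↔ j ∈ S := ⟨mem_of_mem_measurableAtom hj hS,
      fun h => by_contra fun hi => mem_of_mem_measurableAtom hj hS.compl hi h⟩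
    ext l
    obtain rfl | hl := eq_or_ne l j
    · simp [mem_iff]
    · simp [update_of_ne hl]
  rw [← measure_toMeasurable]
  refine congrArg Q (eq_univ_of_forall fun ω => ?_)
  rw [← preimage_comp_eq_of_measurableSet preimage_eq (measurableSet_toMeasurable _ _)]
  refine subset_toMeasurable _ _ fun k => ?_
  obtain hk | hk := eq_or_ne (ω k) j
  · simpa [hk] using hij
  · simpa [update_of_ne hk] using hk

theorem IsProd.measure_univ [Nonempty ι] (hQ : IsProd μm Q) : Q univ = 1 := by
  simpa using hQ 0 (Classical.arbitrary _)

variable [Countable ι] {T : Set (ℕ → ι)} {I : Set ℝ} {x : ℝ}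

theorem measure_cylinder_inter_chain_mem_le
    (hT : ∀ n (c : ℕ → ι), Q (T ∩ {ω | ∀ k < n, ω k = c k}) ≤ ∏ k ∈ Finset.range n, p (c k))
    (k n : ℕ) (c : ℕ → ι) :
    Q (T ∩ {ω | ∀ j < n, ω j = c j} ∩ {ω | chain G ω x (n + k) ∈ I}) ≤
      (∏ j ∈ Finset.range n, p (c j)) *
        (transitionOp G p)^[k] (I.indicator 1) (chain G c x n) := by
  induction k generalizing n c with
  | zero =>
    by_cases hc : chain G c x n ∈ I
    · simpa [hc] using (measure_mono inter_subset_left).trans (hT n c)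
    · have hempty : T ∩ {ω | ∀ j < n, ω j = c j} ∩ {ω | chain G ω x n ∈ I} = ∅ :=
        eq_empty_of_forall_notMem fun ω hω => hc (chain_congr (G := G) hω.1.2 x ▸ hω.2)
      simp [hempty]
  | succ k ih =>
    have subset_iUnion : T ∩ {ω | ∀ j < n, ω j = c j} ∩ {ω | chain G ω x (n + (k + 1)) ∈ I} ⊆
        ⋃ i, T ∩ {ω | ∀ j < n + 1, ω j = update c n i j} ∩ {ω | chain G ω x (n + 1 + k) ∈ I} := by
      rintro ω ⟨⟨hωT, hωc⟩, hωI⟩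
      refine mem_iUnion.2 ⟨ω n, ⟨hωT, fun j hj => ?_⟩, by rwa [add_assoc, add_comm 1 k]⟩
      obtain hj | rfl := Nat.lt_succ_iff_lt_or_eq.1 hj
      · rw [update_of_ne hj.ne, hωc j hj]
      · rw [update_self]
    calc _ ≤ ∑' i, Q (T ∩ {ω | ∀ j < n + 1, ω j = update c n i j} ∩
            {ω | chain G ω x (n + 1 + k) ∈ I}) :=
          (measure_mono subset_iUnion).trans (measure_iUnion_le _)
      _ ≤ ∑' i, (∏ j ∈ Finset.range n, p (c j)) *
            (p i * (transitionOp G p)^[k] (I.indicator 1) (G i (chain G c x n))) :=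
          ENNReal.tsum_le_tsum fun i => by
            simpa only [chain_update_succ, prod_range_succ_update, mul_assoc]
              using ih (n + 1) (update c n i)
      _ = _ := by rw [ENNReal.tsum_mul_left, iterate_succ_apply', transitionOp]

/-- Borel–Cantelli. The set `T` may be non-measurable, so `Q T` is an outer measure. -/
theorem isRecurrent_of_frequently_chain_mem (hG : ∀ i, Measurable (G i)) (hI : MeasurableSet I)
    (hT : ∀ n (c : ℕ → ι), Q (T ∩ {ω | ∀ k < n, ω k = c k}) ≤ ∏ k ∈ Finset.range n, p (c k))
    (hT_pos : Q T ≠ 0) (hR : ∀ x, ∀ᵐ ω ∂Q, ∃ᶠ n in atTop, chain G ω x n ∈ I) :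
    IsRecurrent G p I := by
  refine ⟨hG, hI, fun x => by_contra fun hfin => hT_pos ?_⟩
  obtain ⟨c, -⟩ := nonempty_of_measure_ne_zero hT_pos
  have measure_le (k : ℕ) :
      Q (T ∩ {ω | chain G ω x k ∈ I}) ≤ (transitionOp G p)^[k] (I.indicator 1) x := by
    simpa [chain] using measure_cylinder_inter_chain_mem_le (G := G) (I := I) (x := x) hT k 0 c
  have tsum_ne_top : ∑' k, Q (T ∩ {ω | chain G ω x k ∈ I}) ≠ ⊤ := by
    refine ne_top_of_le_ne_top hfin ((ENNReal.tsum_le_tsum measure_le).trans ?_)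
    simp only [ENNReal.tsum_eq_iSup_nat, visits, potential_eq_sum_iterate, le_refl]
  refine measure_mono_null_ae ?_ (measure_limsup_atTop_eq_zero tsum_ne_top)
  filter_upwards [hR x] with ω hω hωT
  exact mem_limsup_iff_frequently_mem.2 (hω.mono fun n hn => ⟨hωT, hn⟩)

namespace IsProd

theorem isRecurrent [Nonempty ι] (hQ : IsProd μm Q) (hG : ∀ i, Measurable (G i))
    (hI : MeasurableSet I) (hR : ∀ x, ∀ᵐ ω ∂Q, ∃ᶠ n in atTop, chain G ω x n ∈ I) :
    IsRecurrent G (fun i => μm {i}) I :=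
  isRecurrent_of_frequently_chain_mem (T := univ) hG hI (fun n c => by rw [univ_inter, hQ n c])
    (by simp [hQ.measure_univ]) hR

/-- Singletons of `ι` are not assumed to be measurable. If a measurable set cannot tell `j` from
another index, then almost every path, in the sense of outer measure, avoids `j`, and the chain is
recurrent without ever using `G j`. -/
theorem measurableSingletonClass [Nonempty ι] (hQ : IsProd μm Q) (hμ : ∀ i, μm {i} ≠ 0)
    (hG : ∀ i, Measurable (G i)) (hI : MeasurableSet I)
    (hR : ∀ x, ∀ᵐ ω ∂Q, ∃ᶠ n in atTop, chain G ω x n ∈ I) {ν : Measure ℝ} [SigmaFinite ν]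
    (hνI : ν I ≠ ⊤) (hν : pushMeasure G (fun i => μm {i}) ν = ν) (hν_ne : ν ≠ 0) :
    MeasurableSingletonClass ι := by
  suffices hatom : ∀ i, measurableAtom i = {i} from
    ⟨fun i => hatom i ▸ MeasurableSet.measurableAtom_of_countable i⟩
  refine fun i => Subset.antisymm (fun j hj => by_contra fun hji => hν_ne ?_) (by simp)
  refine IsRecurrent.eq_zero_of_pushMeasure_eq (j := j) ?_ hνI hν (hμ j)
  refine isRecurrent_of_frequently_chain_mem (T := {ω | ∀ k, ω k ≠ j}) hG hI (fun n c => ?_) ?_ hR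
  · by_cases hc : ∀ k < n, c k ≠ j
    · calc _ ≤ Q {ω | ∀ k < n, ω k = c k} := measure_mono inter_subset_right
        _ = ∏ k ∈ Finset.range n, μm {c k} := hQ n c
        _ = _ := Finset.prod_congr rfl fun k hk => by simp [hc k (Finset.mem_range.1 hk)]
    · push Not at hc
      obtain ⟨k, hk, hck⟩ := hc
      have hempty : {ω : ℕ → ι | ∀ k, ω k ≠ j} ∩ {ω | ∀ k < n, ω k = c k} = ∅ :=
        eq_empty_of_forall_notMem fun ω hω => hω.1 k ((hω.2 k hk).trans hck)
      simp [hempty]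
  · rw [measure_setOf_forall_ne_eq_univ (Ne.symm hji) hj, hQ.measure_univ]
    exact one_ne_zero

end IsProd

end Recurrence

/-! ### Invariant Radon measures -/

section InvariantRadon

open CompactlySupported

theorem IsOPH.continuous {g : ℝ → ℝ} (hg : IsOPH g) : Continuous g :=
  hg.1.monotone.continuous_of_surjective hg.2

theorem IsOPH.hasCompactSupport_comp {g : ℝ → ℝ} (hg : IsOPH g) {f : ℝ → ℝ}
    (hf : HasCompactSupport f) : HasCompactSupport (f ∘ g) :=
  hf.comp_homeomorph (hg.1.orderIsoOfSurjective g hg.2).toHomeomorph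

theorem IsRadon.isFiniteMeasureOnCompacts {ν : Measure ℝ} (hν : IsRadon ν) :
    IsFiniteMeasureOnCompacts ν :=
  ⟨fun {K} hK => hν K hK⟩

theorem msupp_eq_support (ν : Measure ℝ) : msupp ν = ν.support := by
  rw [Measure.support_eq_forall_isOpen]
  ext x
  exact forall_congr' fun U => forall_comm

theorem exists_Icc_subset_measure_Ioo_ne_zero {ν : Measure ℝ} (hν : ν ≠ 0) (a b : ℝ) :
    ∃ a' b', Icc a b ⊆ Icc a' b' ∧ ν (Ioo a' b') ≠ 0 := by
  by_contra! hnull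
  refine hν (Measure.measure_univ_eq_zero.1 (measure_mono_null (fun x _ => ?_)
    (measure_iUnion_null fun n : ℕ => hnull (a - n) (b + n) (Icc_subset_Icc ?_ ?_))))
  · obtain ⟨n, hn⟩ := exists_nat_gt (max (a - x) (x - b))
    obtain ⟨hna, hnb⟩ := max_lt_iff.1 hn
    exact mem_iUnion.2 ⟨n, by linarith, by linarith⟩
  · simp
  · simp

theorem ne_zero_of_accPt_support {ν : Measure ℝ} {z : ℝ} (hz : AccPt z (𝓟 ν.support)) :
    ν ≠ 0 := by
  rintro rfl
  exact NeBot.ne hz (by simp)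

variable {ν : Measure ℝ}

theorem lintegral_eq_ofReal_integral [IsFiniteMeasureOnCompacts ν] (f : C_c(ℝ, ℝ≥0)) :
    ∫⁻ x, f x ∂ν = ENNReal.ofReal (∫ x, f x ∂ν) :=
  lintegral_coe_eq_integral f (f.toReal.integrable.congr (.of_forall f.toReal_apply))

theorem exists_lintegral_ne_zero [IsFiniteMeasureOnCompacts ν] (hν : ν ≠ 0) :
    ∃ f : C_c(ℝ, ℝ≥0), ∫⁻ x, f x ∂ν ≠ 0 := by
  by_contra! hzero
  refine hν (Measure.ext_of_integral_eq_on_compactlySupported_nnreal fun f => ?_)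
  have hle := hzero f
  rw [lintegral_eq_ofReal_integral, ENNReal.ofReal_eq_zero] at hle
  rw [integral_zero_measure]
  exact le_antisymm hle (integral_nonneg fun x => (f x).2)

variable {ι : Type*} [MeasurableSpace ι] {G : ι → ℝ → ℝ} {μm : Measure ι}

theorem isInv_of_pushMeasure_eq [IsFiniteMeasureOnCompacts ν] (hG : ∀ i, Measurable (G i))
    (hν : pushMeasure G (fun i => μm {i}) ν = ν) : IsInv G μm ν := by
  intro f hf hf_supp
  have integrable : Integrable f (pushMeasure G (fun i => μm {i}) ν) := by
    rw [hν]
    exact hf.integrable_of_hasCompactSupport hf_supp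
  calc ∫ x, f x ∂ν = ∫ x, f x ∂(pushMeasure G (fun i => μm {i}) ν) := by rw [hν]
    _ = ∑' i, (μm {i}).toReal * ∫ x, f (G i x) ∂ν := by
        rw [pushMeasure, integral_sum_measure integrable]
        simp only [integral_smul_measure, smul_eq_mul,
          integral_map (hG _).aemeasurable hf.aestronglyMeasurable]

/-- The series in `IsInv` could be non-summable, with junk value `0`; a nonzero left-hand side
rules this out. -/
theorem IsInv.lintegral_pushMeasure_of_ne_zero [IsFiniteMeasure μm] [IsFiniteMeasureOnCompacts ν]
    (hν : IsInv G μm ν) (hG : ∀ i, IsOPH (G i)) {f : C_c(ℝ, ℝ≥0)} (hf : ∫⁻ x, f x ∂ν ≠ 0) :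
    ∫⁻ x, f x ∂(pushMeasure G (fun i => μm {i}) ν) = ∫⁻ x, f x ∂ν := by
  have hinv := hν f.toReal f.toReal.continuous f.toReal.hasCompactSupport
  simp only [CompactlySupportedContinuousMap.toReal_apply] at hinv
  have summable : Summable fun i => (μm {i}).toReal * ∫ x, (f (G i x) : ℝ) ∂ν := by
    by_contra hns
    rw [tsum_eq_zero_of_not_summable hns] at hinv
    exact hf (by rw [lintegral_eq_ofReal_integral, hinv, ENNReal.ofReal_zero])
  have integrable (i : ι) : Integrable (fun x => (f (G i x) : ℝ)) ν := by
    have hcont : Continuous (f.toReal ∘ G i) := f.toReal.continuous.comp (hG i).continuous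
    simpa [comp_def] using hcont.integrable_of_hasCompactSupport (μ := ν)
      ((hG i).hasCompactSupport_comp f.toReal.hasCompactSupport)
  calc ∫⁻ x, f x ∂(pushMeasure G (fun i => μm {i}) ν)
      = ∑' i, μm {i} * ∫⁻ x, f (G i x) ∂ν := by
        have hf_meas : Measurable fun x => (f x : ℝ≥0∞) := by fun_prop
        simp only [pushMeasure, lintegral_sum_measure, lintegral_smul_measure, smul_eq_mul,
          lintegral_map hf_meas (hG _).continuous.measurable]
    _ = ∑' i, ENNReal.ofReal ((μm {i}).toReal * ∫ x, (f (G i x) : ℝ) ∂ν) :=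
        tsum_congr fun i => by
          rw [ENNReal.ofReal_mul ENNReal.toReal_nonneg, ENNReal.ofReal_toReal (measure_ne_top _ _),
            lintegral_coe_eq_integral _ (integrable i)]
    _ = ENNReal.ofReal (∫ x, (f x : ℝ) ∂ν) := by
        rw [hinv, ENNReal.ofReal_tsum_of_nonneg (fun i => by positivity) summable]
    _ = ∫⁻ x, f x ∂ν := (lintegral_eq_ofReal_integral f).symm

theorem IsInv.lintegral_pushMeasure [IsFiniteMeasure μm] [IsFiniteMeasureOnCompacts ν]
    (hν : IsInv G μm ν) (hG : ∀ i, IsOPH (G i)) (hν_ne : ν ≠ 0) (f : C_c(ℝ, ℝ≥0)) :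
    ∫⁻ x, f x ∂(pushMeasure G (fun i => μm {i}) ν) = ∫⁻ x, f x ∂ν := by
  obtain ⟨g, hg⟩ := exists_lintegral_ne_zero hν_ne
  have lintegral_add (ρ : Measure ℝ) :
      ∫⁻ x, (f + g) x ∂ρ = ∫⁻ x, f x ∂ρ + ∫⁻ x, g x ∂ρ := by
    simp only [CompactlySupportedContinuousMap.add_apply, ENNReal.coe_add]
    exact lintegral_add_left (by fun_prop) _
  have hfg := hν.lintegral_pushMeasure_of_ne_zero hG (f := f + g)
    (by rw [lintegral_add]; simp [hg])
  rw [lintegral_add, lintegral_add, hν.lintegral_pushMeasure_of_ne_zero hG hg] at hfg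
  refine (ENNReal.add_left_inj ?_).1 hfg
  rw [lintegral_eq_ofReal_integral]
  exact ENNReal.ofReal_ne_top

theorem IsInv.pushMeasure_eq [IsFiniteMeasure μm] [IsFiniteMeasureOnCompacts ν]
    (hν : IsInv G μm ν) (hG : ∀ i, IsOPH (G i)) (hν_ne : ν ≠ 0) :
    pushMeasure G (fun i => μm {i}) ν = ν := by
  have hfin : IsFiniteMeasureOnCompacts (pushMeasure G (fun i => μm {i}) ν) := by
    refine ⟨fun {K} hK => ?_⟩
    obtain ⟨f, hfK, -, hf, -⟩ := exists_continuous_one_zero_of_isCompact hK isClosed_empty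
      (disjoint_empty K)
    set F : C_c(ℝ, ℝ≥0) := CompactlySupportedContinuousMap.nnrealPart ⟨f, hf⟩
    have one_le (x : ℝ) (hx : x ∈ K) : 1 ≤ (F x : ℝ≥0∞) := by simp [F, hfK hx]
    calc pushMeasure G (fun i => μm {i}) ν K ≤ ∫⁻ x, F x ∂(pushMeasure G (fun i => μm {i}) ν) := by
          rw [← setLIntegral_one]
          exact (setLIntegral_mono' hK.measurableSet one_le).trans (setLIntegral_le_lintegral _ _)
      _ = ENNReal.ofReal (∫ x, F x ∂ν) := by
          rw [hν.lintegral_pushMeasure hG hν_ne, lintegral_eq_ofReal_integral]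
      _ < ⊤ := ENNReal.ofReal_lt_top
  refine Measure.ext_of_integral_eq_on_compactlySupported_nnreal fun f => ?_
  have heq := hν.lintegral_pushMeasure hG hν_ne f
  rw [lintegral_eq_ofReal_integral, lintegral_eq_ofReal_integral] at heq
  exact (ENNReal.ofReal_eq_ofReal_iff (by positivity) (by positivity)).1 heq

theorem IsErg.isErgodicStationary [IsFiniteMeasure μm] [IsFiniteMeasureOnCompacts ν]
    (hν : IsErg G μm ν) (hG : ∀ i, IsOPH (G i)) (hν_ne : ν ≠ 0) :
    IsErgodicStationary G (fun i => μm {i}) ν where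
  stationary := hν.1.pushMeasure_eq hG hν_ne
  ergodic A hA h := hν.2 A hA (isInv_of_pushMeasure_eq (fun i => (hG i).continuous.measurable) h)

end InvariantRadon

theorem ergodic_measures_nested_support_proportional_general
    {ι : Type*} [Countable ι] [MeasurableSpace ι]
    (G : ι → ℝ → ℝ) (hG : ∀ i, IsOPH (G i))
    (μm : Measure ι) [IsProbabilityMeasure μm] (hpos : ∀ i, 0 < μm {i})
    (Q : Measure (ℕ → ι)) (hQ : IsProd μm Q)
    (hR : CondR G Q)
    (ν₁ ν₂ : Measure ℝ)
    (hrad₁ : IsRadon ν₁) (herg₁ : IsErg G μm ν₁)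
    (hrad₂ : IsRadon ν₂) (herg₂ : IsErg G μm ν₂)
    (hsupp : msupp ν₁ ⊆ msupp ν₂)
    (hacc : ∃ x : ℝ, AccPt x (𝓟 (msupp ν₁))) :
    ∃ C : ℝ≥0, 0 < C ∧ ν₁ = C • ν₂ := by
  have := hrad₁.isFiniteMeasureOnCompacts
  have := hrad₂.isFiniteMeasureOnCompacts
  have : Nonempty ι := nonempty_of_isProbabilityMeasure μm
  simp only [msupp_eq_support] at hsupp hacc
  obtain ⟨z, hz₁⟩ := hacc
  obtain ⟨a₀, b₀, -, hR⟩ := hR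
  have hz₂ : AccPt z (𝓟 ν₂.support) := hz₁.mono (principal_mono.2 hsupp)
  have hν₁ : ν₁ ≠ 0 := ne_zero_of_accPt_support hz₁
  have hG_meas (i : ι) : Measurable (G i) := (hG i).continuous.measurable
  have h₁ := herg₁.isErgodicStationary hG hν₁
  have h₂ := herg₂.isErgodicStationary hG (ne_zero_of_accPt_support hz₂)
  have : MeasurableSingletonClass ι := hQ.measurableSingletonClass (fun i => (hpos i).ne') hG_meas
    measurableSet_Icc hR isCompact_Icc.measure_ne_top h₁.stationary hν₁
  have hp : ∑' i, μm {i} ≤ 1 := by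
    simpa using (Measure.tsum_indicator_apply_singleton μm univ .univ).le
  obtain ⟨a, b, hsub, hab⟩ := exists_Icc_subset_measure_Ioo_ne_zero hν₁ a₀ b₀
  have hI := (hQ.isRecurrent hG_meas measurableSet_Icc hR).mono hsub measurableSet_Icc
  have : NullSingletonClass ν₁ := h₁.nullSingletonClass_of_accPt_support hI
    isCompact_Icc.measure_ne_top (fun i => (hG i).1.injective) hp hz₁
  have : NullSingletonClass ν₂ := h₂.nullSingletonClass_of_accPt_support hI
    isCompact_Icc.measure_ne_top (fun i => (hG i).1.injective) hp hz₂
  exact (h₁.eq_smul_or_mutuallySingular h₂ hI isCompact_Icc.measure_ne_top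
    isCompact_Icc.measure_ne_top).resolve_right
    (h₁.not_mutuallySingular h₂ (fun i => (hG i).1.monotone) hI hp hsupp hab)

/-- **Theorem.** Under conditions (R) and (U), if `ν₁, ν₂` are ergodic invariant Radon
measures with `supp ν₁ ⊆ supp ν₂` and `supp ν₁` not discrete (it has an accumulation
point), then `ν₁ = C • ν₂` for some constant `C > 0`. -/
theorem ergodic_measures_nested_support_proportional
    {ι : Type*} [Countable ι] [MeasurableSpace ι]
    (G : ι → ℝ → ℝ) (hG : ∀ i, IsOPH (G i))
    (μm : Measure ι) [IsProbabilityMeasure μm] (hpos : ∀ i, 0 < μm {i})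
    (Q : Measure (ℕ → ι)) (hQ : IsProd μm Q)
    (hR : CondR G Q) (hU : CondU G)
    (ν₁ ν₂ : Measure ℝ)
    (hrad₁ : IsRadon ν₁) (herg₁ : IsErg G μm ν₁)
    (hrad₂ : IsRadon ν₂) (herg₂ : IsErg G μm ν₂)
    (hsupp : msupp ν₁ ⊆ msupp ν₂)
    (hacc : ∃ x : ℝ, AccPt x (𝓟 (msupp ν₁))) :
    ∃ C : ℝ≥0, 0 < C ∧ ν₁ = C • ν₂ := by
  exact ergodic_measures_nested_support_proportional_general G hG μm hpos Q hQ hR ν₁ ν₂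
    hrad₁ herg₁ hrad₂ herg₂ hsupp hacc
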